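/- Let m ≥ 1 be an integer and 1 ≤ B < ∞ a real number. Let E_m(B) = { x ∈ (0,1) irrational : a_n(x)·a_{n+1}(x)⋯a_{n+m−1}(x) ≥ B^n for infinitely many n ∈ ℕ }. Then dim_H E_m(B) = t_B^{(m)}, where t_B^{(m)} = inf{ s ∈ [0,1] : limsup_{n→∞} (1/n)·log Σ_{(a_1,…,a_n) ∈ (ℕ≥1)^n} B^{−n·f_m(s)}·q_n(a_1,…,a_n)^{−2s} ≤ 0 } (the limsup taken in the extended reals), and f_m is given by the iterative formula f_1(s) = s and f_{k+1}(s) = s·f_k(s)/(1 − s + f_k(s)) for k ≥ 1. -/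

import Mathlib

open Filter MeasureTheory Set

/-- The Gauss map `T(x) = 1/x - ⌊1/x⌋`. -/
noncomputable def gaussMap (x : ℝ) : ℝ := 1 / x - (⌊1 / x⌋ : ℤ)

/-- The `n`-th partial quotient `a_n(x)` (for `n ≥ 1`) of the continued
fraction expansion of `x`: `a_n(x) = ⌊1 / T^{n-1}(x)⌋`. -/
noncomputable def pq (x : ℝ) (n : ℕ) : ℕ := ⌊1 / (gaussMap^[n - 1] x)⌋₊

/-- The continuant `q_n(a_1, …, a_n)`: `q_0 = 1`, `q_1 = a_1`,
`q_k = a_k q_{k-1} + q_{k-2}`. -/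
def contQ : (n : ℕ) → (Fin n → ℕ) → ℕ
  | 0, _ => 1
  | 1, a => a 0
  | (n + 2), a =>
      a (Fin.last (n + 1)) * contQ (n + 1) (Fin.init a) +
        contQ n (Fin.init (Fin.init a))

/-- `s_B`: the Wang–Wu pressure exponent. -/
noncomputable def sExp (B : ℝ) : ℝ :=
  sInf {s : ℝ | 0 ≤ s ∧
    Filter.atTop.limsup (fun n : ℕ =>
      (((n : ℝ)⁻¹ : ℝ) : EReal) * ENNReal.log (∑' a : Fin n → ℕ+,
        ENNReal.ofReal ((B ^ n * ((contQ n fun i => (a i : ℕ)) : ℝ) ^ 2) ^ (-s)))) ≤ 0}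

/-- `g_{B₁,B₂}`: the two-parameter pressure exponent. -/
noncomputable def gExp (B₁ B₂ : ℝ) : ℝ :=
  sInf {s : ℝ | 0 ≤ s ∧
    Filter.atTop.limsup (fun n : ℕ =>
      (((n : ℝ)⁻¹ : ℝ) : EReal) * ENNReal.log (∑' a : Fin n → ℕ+,
        ENNReal.ofReal (B₂ ^ ((1 - s) * (n : ℝ)) *
          (B₁ ^ n * ((contQ n fun i => (a i : ℕ)) : ℝ) ^ 2) ^ (-s)))) ≤ 0}

/-- The iterates `f_1(s) = s`, `f_{k+1}(s) = s f_k(s) / (1 - s + f_k(s))`;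
here `fIter s k = f_{k+1}(s)`, so `f_m(s) = fIter s (m - 1)`. -/
noncomputable def fIter (s : ℝ) : ℕ → ℝ
  | 0 => s
  | (k + 1) => s * fIter s k / (1 - s + fIter s k)

/-- `t_B^{(m)}`: the Huang–Wu–Xu pressure exponent. -/
noncomputable def tExpM (B : ℝ) (m : ℕ) : ℝ :=
  sInf {s : ℝ | 0 ≤ s ∧ s ≤ 1 ∧
    Filter.atTop.limsup (fun n : ℕ =>
      (((n : ℝ)⁻¹ : ℝ) : EReal) * ENNReal.log (∑' a : Fin n → ℕ+,
        ENNReal.ofReal (B ^ (-(n : ℝ) * fIter s (m - 1)) *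
          ((contQ n fun i => (a i : ℕ)) : ℝ) ^ (-(2 * s))))) ≤ 0}

/-!
Upper bound: if the product of `m` consecutive partial quotients starting at `n` reaches `B ^ n`,
then some first partial product crosses from below a threshold `B ^ (c_k n)` to above
`B ^ (c_{k+1} n)`, where `c_0 = 0` and `c_m = 1`. The cylinder stopped at this crossing is short.
With `s c_{j+1} = (1 - s) c_j + F` every crossing contributes `B ^ (-n F) q_n ^ (-2 s)` to the
`s`-dimensional sum, up to a convergent factor, and `c_m = 1` holds exactly when `F = f_m(s)`.

Lower bound: if the pressure at `s` is positive, then a finite alphabet of blocks carries enough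
`s`-dimensional mass to pay for a factor `B ^ F` per digit. Concatenate such blocks and, at sparse
times `n`, write a run of `m` digits of sizes `B ^ (n (c_{j+1} - c_j))`, each free within a
factor `2`. The blocks preceding a run have saved the factor `B ^ (n F)` that the run costs. Reading
these words off a self-similar partition of `[0, 1)` gives a coding whose inverse is `s`-Hölder.
-/

/-! ### The Gauss map and continuants -/

lemma pq_succ (x : ℝ) (n : ℕ) : pq x (n + 1) = ⌊1 / (gaussMap^[n] x)⌋₊ := by
  simp [pq]

lemma inv_eq_floor_add_gaussMap {x : ℝ} (hx : 0 ≤ x) : x⁻¹ = (⌊1 / x⌋₊ : ℝ) + gaussMap x := by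
  rw [gaussMap, natCast_floor_eq_intCast_floor (by positivity), add_sub_cancel, one_div]

lemma gaussMap_mem_Ico (x : ℝ) : gaussMap x ∈ Ico (0 : ℝ) 1 :=
  ⟨Int.fract_nonneg _, Int.fract_lt_one _⟩

lemma irrational_gaussMap {x : ℝ} (hx : Irrational x) : Irrational (gaussMap x) := by
  simpa only [gaussMap, one_div] using (irrational_inv_iff.2 hx).sub_intCast _

lemma irrational_iterate_gaussMap {x : ℝ} (hx : Irrational x) (n : ℕ) :
    Irrational (gaussMap^[n] x) :=
  Function.Iterate.rec _ hx (fun _ => irrational_gaussMap) n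

lemma iterate_gaussMap_mem_Ico {x : ℝ} (hx : x ∈ Ico (0 : ℝ) 1) (n : ℕ) :
    gaussMap^[n] x ∈ Ico (0 : ℝ) 1 :=
  Function.Iterate.rec _ hx (fun _ _ => gaussMap_mem_Ico _) n

lemma iterate_gaussMap_mem_Ioo {x : ℝ} (hx : x ∈ Ioo (0 : ℝ) 1) (hirr : Irrational x) (n : ℕ) :
    gaussMap^[n] x ∈ Ioo (0 : ℝ) 1 :=
  have h := iterate_gaussMap_mem_Ico (Ioo_subset_Ico_self hx) n
  ⟨h.1.lt_of_ne' (irrational_iterate_gaussMap hirr n).ne_zero, h.2⟩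

lemma one_le_pq_succ {x : ℝ} {n : ℕ} (hx : gaussMap^[n] x ∈ Ioo (0 : ℝ) 1) :
    1 ≤ pq x (n + 1) := by
  rw [pq_succ, Nat.one_le_floor_iff, one_div]
  exact (one_le_inv₀ hx.1).2 hx.2.le

lemma inv_iterate_gaussMap {x : ℝ} {n : ℕ} (hx : 0 < gaussMap^[n] x) :
    (gaussMap^[n] x)⁻¹ = (pq x (n + 1) : ℝ) + gaussMap^[n + 1] x := by
  rw [pq_succ, inv_eq_floor_add_gaussMap hx.le, Function.iterate_succ_apply']

lemma one_le_contQ : ∀ (n : ℕ) (a : Fin n → ℕ), (∀ i, 1 ≤ a i) → 1 ≤ contQ n a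
  | 0, _, _ => le_rfl
  | 1, _, ha => ha 0
  | n + 2, a, ha =>
    (Nat.mul_le_mul (ha _) (one_le_contQ (n + 1) (Fin.init a) fun _ => ha _)).trans
      (Nat.le_add_right _ _)

lemma contQ_init_le : ∀ (n : ℕ) (a : Fin (n + 1) → ℕ), (∀ i, 1 ≤ a i) →
    contQ n (Fin.init a) ≤ contQ (n + 1) a
  | 0, _, ha => ha 0
  | _ + 1, _, ha => (Nat.le_mul_of_pos_left _ (ha _)).trans (Nat.le_add_right _ _)

lemma two_pow_le_two_mul_contQ_sq :
    ∀ (n : ℕ) (a : Fin n → ℕ), (∀ i, 1 ≤ a i) → 2 ^ n ≤ 2 * contQ n a ^ 2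
  | 0, _, _ => by simp [contQ]
  | 1, a, ha => by nlinarith [ha 0, show contQ 1 a = a 0 from rfl]
  | n + 2, a, ha => by
    have ih := two_pow_le_two_mul_contQ_sq n (Fin.init (Fin.init a)) fun _ => ha _
    have hdouble : 2 * contQ n (Fin.init (Fin.init a)) ≤ contQ (n + 2) a := by
      have h_init := contQ_init_le n (Fin.init a) fun _ => ha _
      have h_last := Nat.le_mul_of_pos_left (contQ (n + 1) (Fin.init a)) (ha (Fin.last (n + 1)))
      rw [contQ]
      omega
    calc 2 ^ (n + 2) = 2 ^ 2 * 2 ^ n := by ring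
      _ ≤ 2 ^ 2 * (2 * contQ n (Fin.init (Fin.init a)) ^ 2) := by gcongr
      _ = 2 * (2 * contQ n (Fin.init (Fin.init a))) ^ 2 := by ring
      _ ≤ 2 * contQ (n + 2) a ^ 2 := by gcongr

/-- The denominator `q_n(x)` of the `n`-th convergent of `x`. -/
noncomputable def cfDenom (x : ℝ) (n : ℕ) : ℕ := contQ n fun i => pq x (i + 1)

lemma cfDenom_add_two (x : ℝ) (n : ℕ) :
    cfDenom x (n + 2) = pq x (n + 2) * cfDenom x (n + 1) + cfDenom x n := rfl

lemma cfDenom_le_succ {x : ℝ} {n : ℕ} (hx : ∀ i < n + 1, gaussMap^[i] x ∈ Ioo (0 : ℝ) 1) :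
    cfDenom x n ≤ cfDenom x (n + 1) :=
  contQ_init_le n (fun i => pq x (i + 1)) fun i => one_le_pq_succ (hx i i.2)

/-- The product of the inverses `1 / Tⁱx` over the first `n` points of the Gauss orbit of `x`.
It is comparable to `q_n(x)`, and `Tⁿ` expands distances on cylinders exactly by such products. -/
noncomputable def invOrbitProd (x : ℝ) (n : ℕ) : ℝ := ∏ i ∈ Finset.range n, (gaussMap^[i] x)⁻¹

lemma invOrbitProd_succ (x : ℝ) (n : ℕ) :
    invOrbitProd x (n + 1) = invOrbitProd x n * (gaussMap^[n] x)⁻¹ :=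
  Finset.prod_range_succ _ n

lemma invOrbitProd_add (x : ℝ) (n k : ℕ) :
    invOrbitProd x (n + k) = invOrbitProd x n * invOrbitProd (gaussMap^[n] x) k := by
  rw [invOrbitProd, Finset.prod_range_add]
  simp only [invOrbitProd, ← Function.iterate_add_apply, add_comm]

lemma invOrbitProd_pos {x : ℝ} {n : ℕ} (hx : ∀ i < n, 0 < gaussMap^[i] x) :
    0 < invOrbitProd x n :=
  Finset.prod_pos fun i hi => inv_pos.2 (hx i (Finset.mem_range.1 hi))

lemma invOrbitProd_succ_eq_cfDenom {x : ℝ} {n : ℕ} (hx : ∀ i < n + 1, 0 < gaussMap^[i] x) :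
    invOrbitProd x (n + 1) = cfDenom x (n + 1) + cfDenom x n * gaussMap^[n + 1] x := by
  induction n with
  | zero => simpa [invOrbitProd, cfDenom, contQ] using inv_iterate_gaussMap (hx 0 one_pos)
  | succ n ih =>
    have hpos := hx (n + 1) (by omega)
    have hinv := inv_iterate_gaussMap hpos
    have hcancel : gaussMap^[n + 1] x * (pq x (n + 2) + gaussMap^[n + 2] x) = 1 := by
      rw [← hinv, mul_inv_cancel₀ hpos.ne']
    rw [invOrbitProd_succ, ih fun i hi => hx i (by omega), hinv, cfDenom_add_two]
    push_cast
    linear_combination (cfDenom x n : ℝ) * hcancel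

lemma cfDenom_le_invOrbitProd {x : ℝ} {n : ℕ} (hx : ∀ i < n, gaussMap^[i] x ∈ Ioo (0 : ℝ) 1) :
    (cfDenom x n : ℝ) ≤ invOrbitProd x n := by
  cases n with
  | zero => simp [cfDenom, invOrbitProd, contQ]
  | succ n =>
    have hnonneg := (iterate_gaussMap_mem_Ico (Ioo_subset_Ico_self (hx 0 n.succ_pos)) (n + 1)).1
    rw [invOrbitProd_succ_eq_cfDenom fun i hi => (hx i hi).1]
    exact le_add_of_nonneg_right (by positivity)

lemma invOrbitProd_le_two_mul_cfDenom {x : ℝ} {n : ℕ}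
    (hx : ∀ i < n, gaussMap^[i] x ∈ Ioo (0 : ℝ) 1) :
    invOrbitProd x n ≤ 2 * cfDenom x n := by
  cases n with
  | zero => simp [cfDenom, invOrbitProd, contQ]
  | succ n =>
    have hle := (iterate_gaussMap_mem_Ico (Ioo_subset_Ico_self (hx 0 n.succ_pos)) (n + 1)).2.le
    have hmono : (cfDenom x n : ℝ) ≤ cfDenom x (n + 1) := mod_cast cfDenom_le_succ hx
    rw [invOrbitProd_succ_eq_cfDenom fun i hi => (hx i hi).1, two_mul]
    gcongr
    exact (mul_le_of_le_one_right (Nat.cast_nonneg _) hle).trans hmono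

lemma abs_iterate_gaussMap_sub {x y : ℝ} {n : ℕ} (hx : ∀ i < n, 0 < gaussMap^[i] x)
    (hy : ∀ i < n, 0 < gaussMap^[i] y) (hxy : ∀ i < n, pq x (i + 1) = pq y (i + 1)) :
    |gaussMap^[n] x - gaussMap^[n] y| = |x - y| * (invOrbitProd x n * invOrbitProd y n) := by
  induction n with
  | zero => simp [invOrbitProd]
  | succ n ih =>
    have hxn := hx n n.lt_succ_self
    have hyn := hy n n.lt_succ_self
    have hsub : gaussMap^[n + 1] x - gaussMap^[n + 1] y =
        (gaussMap^[n] x)⁻¹ - (gaussMap^[n] y)⁻¹ := by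
      rw [inv_iterate_gaussMap hxn, inv_iterate_gaussMap hyn, hxy n n.lt_succ_self]
      ring
    rw [hsub, inv_sub_inv hxn.ne' hyn.ne', abs_div, abs_sub_comm, abs_of_pos (mul_pos hxn hyn),
      ih (fun i hi => hx i (by omega)) (fun i hi => hy i (by omega))
        fun i hi => hxy i (by omega), invOrbitProd_succ, invOrbitProd_succ]
    field_simp

/-! ### Words and the pressure -/

lemma tsum_pi_fin_succ {α : Type*} {n : ℕ} (f : (Fin (n + 1) → α) → ENNReal) :
    ∑' a, f a = ∑' (a : Fin n → α) (b : α), f (Fin.snoc a b) := by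
  rw [← (Fin.snocEquiv fun _ : Fin (n + 1) => α).tsum_eq, ENNReal.tsum_prod', ENNReal.tsum_comm]
  rfl

/-- The continuant `q_n(a_1, …, a_n)` of a word of positive integers, as a real number. -/
def wordDenom {n : ℕ} (a : Fin n → ℕ+) : ℝ := contQ n fun i => (a i : ℕ)

/-- The product `a_1 ⋯ a_n` of the letters of a word of positive integers, as a real number. -/
def wordProd {n : ℕ} (a : Fin n → ℕ+) : ℝ := ∏ i, ((a i : ℕ) : ℝ)

lemma one_le_wordDenom {n : ℕ} (a : Fin n → ℕ+) : 1 ≤ wordDenom a :=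
  Nat.one_le_cast.2 (one_le_contQ n _ fun i => (a i).2)

lemma wordDenom_pos {n : ℕ} (a : Fin n → ℕ+) : 0 < wordDenom a :=
  one_pos.trans_le (one_le_wordDenom a)

lemma wordDenom_init_le {n : ℕ} (a : Fin (n + 1) → ℕ+) : wordDenom (Fin.init a) ≤ wordDenom a :=
  Nat.cast_le.2 (contQ_init_le n _ fun i => (a i).2)

lemma two_pow_le_two_mul_wordDenom_sq {n : ℕ} (a : Fin n → ℕ+) :
    (2 : ℝ) ^ n ≤ 2 * wordDenom a ^ 2 :=
  show (2 : ℝ) ^ n ≤ 2 * ((contQ n fun i => (a i : ℕ) : ℕ) : ℝ) ^ 2 from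
    mod_cast two_pow_le_two_mul_contQ_sq n _ fun i => (a i).2

lemma wordDenom_snoc {n : ℕ} (a : Fin (n + 1) → ℕ+) (b : ℕ+) :
    wordDenom (Fin.snoc a b : Fin (n + 2) → ℕ+) =
      (b : ℕ) * wordDenom a + wordDenom (Fin.init a) := by
  have hinit : (Fin.init fun i => ((Fin.snoc a b : Fin (n + 2) → ℕ+) i : ℕ)) =
      fun i => (a i : ℕ) := by
    funext i
    simp only [Fin.init, Fin.snoc_castSucc]
  rw [wordDenom, contQ, hinit, Fin.snoc_last]
  push_cast
  rfl

lemma one_le_wordProd {n : ℕ} (a : Fin n → ℕ+) : 1 ≤ wordProd a :=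
  Finset.prod_induction _ (1 ≤ ·) (fun _ _ => one_le_mul_of_one_le_of_one_le) le_rfl
    fun i _ => Nat.one_le_cast.2 (a i).2

lemma wordProd_snoc {n : ℕ} (a : Fin n → ℕ+) (b : ℕ+) :
    wordProd (Fin.snoc a b : Fin (n + 1) → ℕ+) = wordProd a * (b : ℕ) := by
  simp only [wordProd, Fin.prod_univ_castSucc, Fin.snoc_castSucc, Fin.snoc_last]

lemma tsum_wordProd_rpow_ne_top {p : ℝ} (hp : 1 < p) (k : ℕ) :
    ∑' b : Fin k → ℕ+, ENNReal.ofReal (wordProd b ^ (-p)) ≠ ⊤ := by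
  induction k with
  | zero => simp [wordProd]
  | succ k ih =>
    have hzeta : ∑' b : ℕ+, ENNReal.ofReal (((b : ℕ) : ℝ) ^ (-p)) ≠ ⊤ := by
      have hsummable : Summable fun b : ℕ+ => ((b : ℕ) : ℝ) ^ (-p) :=
        (Real.summable_nat_rpow.2 (neg_lt_neg hp)).comp_injective PNat.coe_injective
      rw [← ENNReal.ofReal_tsum_of_nonneg (fun b => by positivity) hsummable]
      exact ENNReal.ofReal_ne_top
    have hsnoc (a : Fin k → ℕ+) (b : ℕ+) :
        ENNReal.ofReal (wordProd (Fin.snoc a b : Fin (k + 1) → ℕ+) ^ (-p)) =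
          ENNReal.ofReal (wordProd a ^ (-p)) * ENNReal.ofReal (((b : ℕ) : ℝ) ^ (-p)) := by
      have ha := zero_le_one.trans (one_le_wordProd a)
      rw [wordProd_snoc, Real.mul_rpow ha (Nat.cast_nonneg _), ENNReal.ofReal_mul (by positivity)]
    simp_rw [tsum_pi_fin_succ, hsnoc, ENNReal.tsum_mul_left, ENNReal.tsum_mul_right]
    exact ENNReal.mul_ne_top ih hzeta

lemma hasSum_sub_succ_of_antitone {g : ℕ → ℝ} (hg : Antitone g)
    (hlim : Tendsto g atTop (nhds 0)) : HasSum (fun n => g n - g (n + 1)) (g 0) := by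
  rw [hasSum_iff_tendsto_nat_of_nonneg fun n => sub_nonneg.2 (hg n.le_succ)]
  simp_rw [Finset.sum_range_sub']
  simpa using hlim.const_sub (g 0)

lemma tsum_pnat_inv_mul_add {x y : ℝ} (hx : 0 < x) (hy : 0 ≤ y) :
    ∑' b : ℕ+, ENNReal.ofReal (((b : ℕ) * x + y) * ((b : ℕ) * x + y + x))⁻¹ =
      ENNReal.ofReal (x * (x + y))⁻¹ := by
  set g : ℕ → ℝ := fun n => x⁻¹ * ((n + 1) * x + y)⁻¹ with hg
  have hterm (n : ℕ) : (((n + 1 : ℕ) * x + y) * ((n + 1 : ℕ) * x + y + x))⁻¹ = g n - g (n + 1) := by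
    simp only [hg]
    push_cast
    field_simp
    ring
  have hanti : Antitone g := fun m n hmn => by
    simp only [hg]
    gcongr
  have hlim : Tendsto g atTop (nhds 0) := by
    have h : Tendsto (fun n : ℕ => ((n : ℝ) + 1) * x + y) atTop atTop :=
      tendsto_atTop_add_const_right _ _
        ((tendsto_atTop_add_const_right _ _ tendsto_natCast_atTop_atTop).atTop_mul_const hx)
    simpa using h.inv_tendsto_atTop.const_mul x⁻¹
  have hsum := hasSum_sub_succ_of_antitone hanti hlim
  rw [tsum_pnat_eq_tsum_succ
    (f := fun b : ℕ => ENNReal.ofReal ((b * x + y) * (b * x + y + x))⁻¹)]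
  simp_rw [hterm]
  rw [← ENNReal.ofReal_tsum_of_nonneg (fun n => sub_nonneg.2 (hanti n.le_succ)) hsum.summable,
    hsum.tsum_eq]
  simp [hg, mul_comm]

/-- The summand is the length of the cylinder of `a`; the cylinders of each level tile `(0, 1)`. -/
lemma tsum_cylinder_length (n : ℕ) :
    ∑' a : Fin (n + 1) → ℕ+,
      ENNReal.ofReal (wordDenom a * (wordDenom a + wordDenom (Fin.init a)))⁻¹ = 1 := by
  induction n with
  | zero =>
    rw [tsum_pi_fin_succ]
    simpa [wordDenom, contQ, Fin.snoc] using tsum_pnat_inv_mul_add one_pos le_rfl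
  | succ n ih =>
    rw [tsum_pi_fin_succ, ← ih]
    refine tsum_congr fun a => ?_
    simp_rw [wordDenom_snoc, Fin.init_snoc]
    exact tsum_pnat_inv_mul_add (wordDenom_pos a) (wordDenom_pos _).le

/-- The `n`-th partition sum `∑ B^{-nF} q_n(a)^{-2s}` of the pressure function. -/
noncomputable def partitionSum (B F s : ℝ) (n : ℕ) : ENNReal :=
  ∑' a : Fin n → ℕ+, ENNReal.ofReal (B ^ (-(n : ℝ) * F) * wordDenom a ^ (-(2 * s)))

/-- The pressure, i.e. the exponential growth rate of the partition sums, is at most `0`. -/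
def NonposPressure (B F s : ℝ) : Prop :=
  limsup (fun n : ℕ => (((n : ℝ)⁻¹ : ℝ) : EReal) * ENNReal.log (partitionSum B F s n)) atTop ≤ 0

lemma inv_mul_log_lt_coe_iff {n : ℕ} (hn : 0 < n) (S : ENNReal) (δ : ℝ) :
    (((n : ℝ)⁻¹ : ℝ) : EReal) * ENNReal.log S < δ ↔ S < ENNReal.ofReal (Real.exp (δ * n)) := by
  have hδ : (δ : EReal) = ENNReal.log (ENNReal.ofReal (Real.exp δ)) := by
    rw [ENNReal.log_ofReal_of_pos (Real.exp_pos _), Real.log_exp]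
  rw [← ENNReal.log_rpow, hδ, ENNReal.log_lt_log_iff, ENNReal.rpow_inv_lt_iff (Nat.cast_pos.2 hn),
    ENNReal.ofReal_rpow_of_pos (Real.exp_pos _), ← Real.exp_mul]

lemma NonposPressure.eventually_partitionSum_lt {B F s δ : ℝ} (h : NonposPressure B F s)
    (hδ : 0 < δ) : ∀ᶠ n : ℕ in atTop, partitionSum B F s n < ENNReal.ofReal (Real.exp (δ * n)) := by
  have hlt := eventually_lt_of_limsup_lt (h.trans_lt (EReal.coe_pos.2 hδ))
  filter_upwards [hlt, eventually_gt_atTop 0] with n hn hpos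
  exact (inv_mul_log_lt_coe_iff hpos _ _).1 hn

lemma exists_frequently_le_partitionSum {B F s : ℝ} (h : ¬NonposPressure B F s) :
    ∃ δ > 0, ∃ᶠ n : ℕ in atTop, ENNReal.ofReal (Real.exp (δ * n)) ≤ partitionSum B F s n := by
  obtain ⟨δ, hδ, hlt⟩ := EReal.lt_iff_exists_real_btwn.1 (not_le.1 h)
  refine ⟨δ, EReal.coe_pos.1 hδ, ?_⟩
  refine ((frequently_lt_of_lt_limsup (by isBoundedDefault) hlt).and_eventually
    (eventually_gt_atTop 0)).mono fun n ⟨hn, hpos⟩ => not_lt.1 fun hS => ?_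
  exact hn.not_gt ((inv_mul_log_lt_coe_iff hpos _ _).2 hS)

lemma partitionSum_one_le_two {B F : ℝ} (hB : 1 ≤ B) (hF : 0 ≤ F) (n : ℕ) :
    partitionSum B F 1 (n + 1) ≤ 2 := by
  have hterm (a : Fin (n + 1) → ℕ+) :
      B ^ (-((n + 1 : ℕ) : ℝ) * F) * wordDenom a ^ (-(2 * 1) : ℝ) ≤
        2 * (wordDenom a * (wordDenom a + wordDenom (Fin.init a)))⁻¹ := by
    have hq := wordDenom_pos a
    have hq' := wordDenom_pos (Fin.init a)
    have hle := wordDenom_init_le a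
    have hBF : B ^ (-((n + 1 : ℕ) : ℝ) * F) ≤ 1 :=
      Real.rpow_le_one_of_one_le_of_nonpos hB (by rw [neg_mul, neg_nonpos]; positivity)
    calc _ ≤ 1 * wordDenom a ^ (-(2 * 1) : ℝ) := by gcongr
      _ = 2 * (wordDenom a * (wordDenom a + wordDenom a))⁻¹ := by
        rw [mul_one, Real.rpow_neg hq.le, Real.rpow_two]
        field_simp
        norm_num
      _ ≤ _ := by gcongr
  calc partitionSum B F 1 (n + 1)
      ≤ ∑' a : Fin (n + 1) → ℕ+,
          2 * ENNReal.ofReal (wordDenom a * (wordDenom a + wordDenom (Fin.init a)))⁻¹ := by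
        refine ENNReal.tsum_le_tsum fun a => (ENNReal.ofReal_le_ofReal (hterm a)).trans_eq ?_
        rw [ENNReal.ofReal_mul zero_le_two, ENNReal.ofReal_ofNat]
    _ = 2 := by rw [ENNReal.tsum_mul_left, tsum_cylinder_length, mul_one]

lemma nonposPressure_one {B F : ℝ} (hB : 1 ≤ B) (hF : 0 ≤ F) : NonposPressure B F 1 := by
  by_contra h
  obtain ⟨δ, hδ, hfreq⟩ := exists_frequently_le_partitionSum h
  have hexp : Tendsto (fun n : ℕ => Real.exp (δ * n)) atTop atTop :=
    Real.tendsto_exp_atTop.comp (tendsto_natCast_atTop_atTop.const_mul_atTop hδ)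
  obtain ⟨n, hn, h_large, hpos⟩ :=
    (hfreq.and_eventually ((hexp.eventually_gt_atTop 2).and (eventually_gt_atTop 0))).exists
  obtain ⟨k, rfl⟩ := Nat.exists_eq_add_one.2 hpos
  refine (hn.trans (partitionSum_one_le_two hB hF k)).not_gt ?_
  simpa using (ENNReal.ofReal_lt_ofReal_iff_of_nonneg zero_le_two).2 h_large

lemma not_nonposPressure_zero (B : ℝ) : ¬NonposPressure B 0 0 := fun h => by
  obtain ⟨n, hn, hpos⟩ :=
    ((h.eventually_partitionSum_lt one_pos).and (eventually_gt_atTop 0)).exists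
  obtain ⟨k, rfl⟩ := Nat.exists_eq_add_one.2 hpos
  simp [partitionSum] at hn

lemma partitionSum_le_of_le {B F s σ : ℝ} {n : ℕ} (hB : 0 < B) (hsσ : s ≤ σ) :
    partitionSum B F σ n ≤
      ENNReal.ofReal ((2 ^ (n : ℝ) / 2) ^ (-(σ - s))) * partitionSum B F s n := by
  rw [partitionSum, partitionSum, ← ENNReal.tsum_mul_left]
  refine ENNReal.tsum_le_tsum fun a => ?_
  have hq := wordDenom_pos a
  have hgrowth : (2 : ℝ) ^ (n : ℝ) / 2 ≤ wordDenom a ^ (2 : ℝ) := by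
    rw [Real.rpow_natCast, Real.rpow_two]
    linarith [two_pow_le_two_mul_wordDenom_sq a]
  rw [← ENNReal.ofReal_mul (by positivity)]
  refine ENNReal.ofReal_le_ofReal ?_
  calc B ^ (-(n : ℝ) * F) * wordDenom a ^ (-(2 * σ))
      = (wordDenom a ^ (2 : ℝ)) ^ (-(σ - s)) *
          (B ^ (-(n : ℝ) * F) * wordDenom a ^ (-(2 * s))) := by
        rw [← Real.rpow_mul hq.le, mul_left_comm, ← Real.rpow_add hq]
        ring_nf
    _ ≤ _ := by
        gcongr ?_ * _
        exact Real.rpow_le_rpow_of_nonpos (by positivity) hgrowth (by linarith)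

lemma NonposPressure.exists_tsum_partitionSum_ne_top {B F s σ : ℝ} (h : NonposPressure B F s)
    (hB : 0 < B) (hsσ : s < σ) : ∃ N : ℕ, ∑' n, partitionSum B F σ (n + N) ≠ ⊤ := by
  set δ : ℝ := (σ - s) * Real.log 2 / 2 with hδ_def
  have hδ : 0 < δ := by
    have := Real.log_pos one_lt_two
    have := sub_pos.2 hsσ
    positivity
  obtain ⟨N, hN⟩ := eventually_atTop.1 (h.eventually_partitionSum_lt hδ)
  have hdecay (n : ℕ) : (2 ^ (n : ℝ) / 2 : ℝ) ^ (-(σ - s)) * Real.exp (δ * n) =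
      2 ^ (σ - s) * Real.exp (-δ) ^ n := by
    rw [Real.div_rpow (by positivity) zero_le_two, ← Real.rpow_mul zero_le_two,
      Real.rpow_neg zero_le_two, div_inv_eq_mul, mul_comm _ (2 ^ (σ - s) : ℝ), mul_assoc,
      Real.rpow_def_of_pos two_pos (_ * _), ← Real.exp_add, ← Real.exp_nat_mul, hδ_def]
    ring_nf
  have hgeom : Summable fun n : ℕ => 2 ^ (σ - s) * Real.exp (-δ) ^ (n + N) :=
    ((summable_nat_add_iff N).2 (summable_geometric_of_lt_one (Real.exp_pos _).le
      (Real.exp_lt_one_iff.2 (neg_lt_zero.2 hδ)))).mul_left _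
  refine ⟨N, ne_top_of_le_ne_top
    (ENNReal.ofReal_ne_top (r := ∑' n, 2 ^ (σ - s) * Real.exp (-δ) ^ (n + N))) ?_⟩
  rw [ENNReal.ofReal_tsum_of_nonneg (fun n => by positivity) hgeom]
  refine ENNReal.tsum_le_tsum fun n => (partitionSum_le_of_le hB hsσ.le).trans ?_
  rw [← hdecay, ENNReal.ofReal_mul (by positivity)]
  gcongr
  exact (hN (n + N) (Nat.le_add_left _ _)).le

/-! ### The upper bound -/

lemma fIter_pos {s : ℝ} (hs : 0 < s) (hs1 : s ≤ 1) (j : ℕ) : 0 < fIter s j := by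
  induction j with
  | zero => exact hs
  | succ j ih => exact div_pos (mul_pos hs ih) (by linarith)

lemma fIter_one (j : ℕ) : fIter 1 j = 1 := by
  induction j with
  | zero => rfl
  | succ j ih => simp [fIter, ih]

lemma fIter_zero (j : ℕ) : fIter 0 j = 0 := by
  cases j <;> simp [fIter]

/-- The exponents `c_j` with `c_0 = 0` and `s c_{j+1} = (1 - s) c_j + F`. In an economical run of
large digits starting at position `n`, the first `j` digits multiply to about `B ^ (c_j n)`. -/
noncomputable def digitExponent (s F : ℝ) : ℕ → ℝ
  | 0 => 0
  | j + 1 => ((1 - s) * digitExponent s F j + F) / s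

lemma mul_digitExponent_succ {s : ℝ} (hs : s ≠ 0) (F : ℝ) (j : ℕ) :
    s * digitExponent s F (j + 1) = (1 - s) * digitExponent s F j + F :=
  mul_div_cancel₀ _ hs

lemma digitExponent_succ_eq_div_fIter {s : ℝ} (hs : 0 < s) (hs1 : s ≤ 1) (F : ℝ) (j : ℕ) :
    digitExponent s F (j + 1) = F / fIter s j := by
  induction j with
  | zero => simp [digitExponent, fIter]
  | succ j ih =>
    have hf := fIter_pos hs hs1 j
    have : 0 < 1 - s + fIter s j := by linarith
    rw [digitExponent, ih, fIter]
    field_simp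

lemma digitExponent_fIter_pred {s : ℝ} (hs : 0 < s) (hs1 : s ≤ 1) {m : ℕ} (hm : 1 ≤ m) :
    digitExponent s (fIter s (m - 1)) m = 1 := by
  obtain ⟨k, rfl⟩ := Nat.exists_eq_add_one.2 hm
  rw [digitExponent_succ_eq_div_fIter hs hs1, Nat.add_sub_cancel, div_self (fIter_pos hs hs1 k).ne']

lemma digitExponent_nonneg {s F : ℝ} (hs : 0 < s) (hs1 : s ≤ 1) (hF : 0 ≤ F) (j : ℕ) :
    0 ≤ digitExponent s F j := by
  induction j with
  | zero => exact le_rfl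
  | succ j ih => exact div_nonneg (add_nonneg (mul_nonneg (sub_nonneg.2 hs1) ih) hF) hs.le

lemma two_mul_sub_one_mul_digitExponent_le {s F : ℝ} (hs : 0 < s) (hs1 : s ≤ 1) (hF : 0 ≤ F)
    (j : ℕ) : (2 * s - 1) * digitExponent s F j ≤ F := by
  induction j with
  | zero => simpa [digitExponent]
  | succ j ih =>
    rw [digitExponent, mul_div_assoc', div_le_iff₀ hs]
    nlinarith

lemma digitExponent_monotone {s F : ℝ} (hs : 0 < s) (hs1 : s ≤ 1) (hF : 0 ≤ F) :
    Monotone (digitExponent s F) := by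
  refine monotone_nat_of_le_succ fun j => ?_
  rw [digitExponent, le_div_iff₀ hs]
  linarith [two_mul_sub_one_mul_digitExponent_le hs hs1 hF j]

lemma hausdorffMeasure_limsup_cofinite_eq_zero {X ι : Type*} [EMetricSpace X] [MeasurableSpace X]
    [BorelSpace X] [Countable ι] {J : ι → Set X} {d : ℝ} (hd : 0 < d)
    (hsum : ∑' i, Metric.ediam (J i) ^ d ≠ ⊤) : μH[d] (limsup J cofinite) = 0 := by
  have htail := ENNReal.tendsto_tsum_compl_atTop_zero hsum
  set tail : Finset ι → ENNReal := fun F => ∑' i : {i // i ∉ F}, Metric.ediam (J i) ^ d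
  have hmesh : Tendsto (fun F => tail F ^ d⁻¹) atTop (nhds 0) := by
    simpa [ENNReal.zero_rpow_of_pos (inv_pos.2 hd), Function.comp_def] using
      (ENNReal.continuous_rpow_const (y := d⁻¹)).continuousAt.tendsto.comp htail
  refine le_antisymm ?_ bot_le
  calc μH[d] (limsup J cofinite) ≤ liminf tail atTop :=
        Measure.hausdorffMeasure_le_liminf_tsum (ι := fun F : Finset ι => {i // i ∉ F}) d _
          (fun F => tail F ^ d⁻¹) hmesh (fun _ i => J i)
          (Eventually.of_forall fun F i => (ENNReal.le_rpow_inv_iff hd).2 <|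
            ENNReal.le_tsum (f := fun i : {i // i ∉ F} => Metric.ediam (J i) ^ d) i)
          (Eventually.of_forall fun F x hx => by
            rw [cofinite.limsup_set_eq] at hx
            obtain ⟨i, hxi, hiF⟩ := hx.exists_notMem_finset F
            exact mem_iUnion.2 ⟨⟨i, hiF⟩, hxi⟩)
    _ = 0 := htail.liminf_eq

lemma iterate_gaussMap_mul_pq_le_one {x : ℝ} {n : ℕ} (hx : 0 ≤ gaussMap^[n] x) :
    gaussMap^[n] x * pq x (n + 1) ≤ 1 := by
  have hfloor : (pq x (n + 1) : ℝ) ≤ 1 / gaussMap^[n] x := by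
    rw [pq_succ]
    exact Nat.floor_le (by positivity)
  calc gaussMap^[n] x * pq x (n + 1) ≤ gaussMap^[n] x * (1 / gaussMap^[n] x) := by gcongr
    _ ≤ 1 := by rw [mul_one_div]; exact div_self_le_one _

lemma prod_pq_le_invOrbitProd {x : ℝ} {n : ℕ} (hx : ∀ i < n, gaussMap^[i] x ∈ Ioo (0 : ℝ) 1) :
    ∏ i ∈ Finset.range n, (pq x (i + 1) : ℝ) ≤ invOrbitProd x n := by
  refine Finset.prod_le_prod (fun _ _ => Nat.cast_nonneg _) fun i hi => ?_
  have hxi := (hx i (Finset.mem_range.1 hi)).1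
  rw [inv_iterate_gaussMap hxi, Function.iterate_succ_apply']
  exact le_add_of_nonneg_right (gaussMap_mem_Ico _).1

/-- The irrationals of `(0, 1)` whose expansion starts with `a` and then `b`, where the product of
the letters of `b` is at most `α`, but reaches `β` on including the next partial quotient. -/
def stoppedCylinder {n k : ℕ} (a : Fin n → ℕ+) (b : Fin k → ℕ+) (α β : ℝ) : Set ℝ :=
  {x | x ∈ Ioo (0 : ℝ) 1 ∧ Irrational x ∧ (∀ i : Fin n, pq x (i + 1) = a i) ∧
    (∀ i : Fin k, pq x (n + i + 1) = b i) ∧ wordProd b ≤ α ∧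
    β ≤ wordProd b * pq x (n + k + 1)}

section StoppedCylinder

variable {n k : ℕ} {a : Fin n → ℕ+} {b : Fin k → ℕ+} {α β : ℝ}

lemma wordDenom_mul_wordProd_le_invOrbitProd {x : ℝ} (hx : x ∈ stoppedCylinder a b α β) :
    wordDenom a * wordProd b ≤ invOrbitProd x (n + k) := by
  obtain ⟨hmem, hirr, ha, hb, -, -⟩ := hx
  have horbit := iterate_gaussMap_mem_Ioo hmem hirr
  have hdenom : wordDenom a = cfDenom x n := by simp only [wordDenom, cfDenom, ha]
  have hprod : wordProd b = ∏ i ∈ Finset.range k, (pq (gaussMap^[n] x) (i + 1) : ℝ) := by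
    rw [wordProd, Finset.prod_range]
    refine Finset.prod_congr rfl fun i _ => ?_
    rw [← hb i, pq_succ, pq_succ, ← Function.iterate_add_apply, add_comm n]
  rw [invOrbitProd_add, hdenom, hprod]
  refine mul_le_mul (cfDenom_le_invOrbitProd fun i _ => horbit i)
    (prod_pq_le_invOrbitProd fun i _ => ?_) (by positivity)
    (invOrbitProd_pos fun i _ => (horbit i).1).le
  rw [← Function.iterate_add_apply]
  exact horbit _

lemma iterate_gaussMap_le_of_mem_stoppedCylinder {x : ℝ} (hβ : 0 < β)
    (hx : x ∈ stoppedCylinder a b α β) : gaussMap^[n + k] x ≤ wordProd b / β := by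
  have hP := zero_le_one.trans (one_le_wordProd b)
  have hnonneg := (iterate_gaussMap_mem_Ico (Ioo_subset_Ico_self hx.1) (n + k)).1
  rw [le_div_iff₀ hβ]
  calc gaussMap^[n + k] x * β ≤ gaussMap^[n + k] x * (wordProd b * pq x (n + k + 1)) := by
        gcongr
        exact hx.2.2.2.2.2
    _ = wordProd b * (gaussMap^[n + k] x * pq x (n + k + 1)) := by ring
    _ ≤ wordProd b := mul_le_of_le_one_right hP (iterate_gaussMap_mul_pq_le_one hnonneg)

lemma abs_sub_le_of_mem_stoppedCylinder {x y : ℝ} (hβ : 0 < β)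
    (hx : x ∈ stoppedCylinder a b α β) (hy : y ∈ stoppedCylinder a b α β) :
    |x - y| ≤ (β * wordDenom a ^ 2 * wordProd b)⁻¹ := by
  have hq := wordDenom_pos a
  have hP := one_pos.trans_le (one_le_wordProd b)
  have hxorbit := iterate_gaussMap_mem_Ioo hx.1 hx.2.1
  have hyorbit := iterate_gaussMap_mem_Ioo hy.1 hy.2.1
  have hdigits : ∀ i < n + k, pq x (i + 1) = pq y (i + 1) := fun i hi => by
    rcases lt_or_ge i n with hin | hin
    · exact (hx.2.2.1 ⟨i, hin⟩).trans (hy.2.2.1 ⟨i, hin⟩).symm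
    · obtain ⟨j, rfl⟩ := Nat.exists_eq_add_of_le hin
      have hj : j < k := by omega
      exact (hx.2.2.2.1 ⟨j, hj⟩).trans (hy.2.2.2.1 ⟨j, hj⟩).symm
  have hiterate : |gaussMap^[n + k] x - gaussMap^[n + k] y| ≤ wordProd b / β :=
    abs_sub_le_of_nonneg_of_le (hxorbit _).1.le (iterate_gaussMap_le_of_mem_stoppedCylinder hβ hx)
      (hyorbit _).1.le (iterate_gaussMap_le_of_mem_stoppedCylinder hβ hy)
  have hexpand : |x - y| * ((wordDenom a * wordProd b) * (wordDenom a * wordProd b)) ≤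
      wordProd b / β := by
    refine le_trans ?_ hiterate
    rw [abs_iterate_gaussMap_sub (fun i _ => (hxorbit i).1) (fun i _ => (hyorbit i).1) hdigits]
    have hxprod := wordDenom_mul_wordProd_le_invOrbitProd hx
    have hyprod := wordDenom_mul_wordProd_le_invOrbitProd hy
    gcongr
    exact (mul_pos hq hP).le.trans hxprod
  calc |x - y| ≤ wordProd b / β / ((wordDenom a * wordProd b) * (wordDenom a * wordProd b)) :=
        (le_div_iff₀ (by positivity)).2 hexpand
    _ = _ := by field_simp

lemma inv_rpow_le_of_le_threshold {s σ q P : ℝ} (hs1 : s ≤ 1) (hsσ : s ≤ σ) (hβ : 1 ≤ β)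
    (hq : 0 < q) (hP : 0 < P) (hPα : P ≤ α) :
    ((β * q ^ 2 * P)⁻¹) ^ σ ≤
      α ^ (1 - s) * β ^ (-s) * q ^ (-(2 * σ)) * P ^ (-(1 + (σ - s))) := by
  have hβ0 := one_pos.trans_le hβ
  have hα := hP.trans_le hPα
  have hαP : P ^ (1 - s) ≤ α ^ (1 - s) := Real.rpow_le_rpow hP.le hPα (sub_nonneg.2 hs1)
  have hβσ : β ^ (-σ) ≤ β ^ (-s) := Real.rpow_le_rpow_of_exponent_le hβ (neg_le_neg hsσ)
  calc ((β * q ^ 2 * P)⁻¹) ^ σ = β ^ (-σ) * q ^ (-(2 * σ)) * P ^ (-σ) := by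
        rw [Real.inv_rpow (by positivity), ← Real.rpow_neg (by positivity),
          Real.mul_rpow (by positivity) hP.le, Real.mul_rpow hβ0.le (by positivity),
          ← Real.rpow_two, ← Real.rpow_mul hq.le, mul_neg]
    _ = P ^ (1 - s) * β ^ (-σ) * q ^ (-(2 * σ)) * P ^ (-(1 + (σ - s))) := by
        rw [show -σ = (1 - s) + -(1 + (σ - s)) by ring, Real.rpow_add hP]
        ring_nf
    _ ≤ α ^ (1 - s) * β ^ (-s) * q ^ (-(2 * σ)) * P ^ (-(1 + (σ - s))) := by gcongr

lemma ediam_stoppedCylinder_rpow_le {s σ : ℝ} (hs : 0 < s) (hs1 : s ≤ 1) (hsσ : s ≤ σ)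
    (hβ : 1 ≤ β) :
    Metric.ediam (stoppedCylinder a b α β) ^ σ ≤
      ENNReal.ofReal (α ^ (1 - s) * β ^ (-s) * wordDenom a ^ (-(2 * σ))) *
        ENNReal.ofReal (wordProd b ^ (-(1 + (σ - s)))) := by
  have hσ := hs.trans_le hsσ
  have hq := wordDenom_pos a
  have hP := one_pos.trans_le (one_le_wordProd b)
  rcases (stoppedCylinder a b α β).eq_empty_or_nonempty with hempty | ⟨x, hx⟩
  · rw [hempty, Metric.ediam_empty, ENNReal.zero_rpow_of_pos hσ]
    exact bot_le
  have hα := hP.trans_le hx.2.2.2.2.1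
  have hdiam : Metric.ediam (stoppedCylinder a b α β) ≤
      ENNReal.ofReal (β * wordDenom a ^ 2 * wordProd b)⁻¹ :=
    Metric.ediam_le fun y hy z hz => by
      rw [edist_dist, Real.dist_eq]
      exact ENNReal.ofReal_le_ofReal
        (abs_sub_le_of_mem_stoppedCylinder (one_pos.trans_le hβ) hy hz)
  calc Metric.ediam (stoppedCylinder a b α β) ^ σ
      ≤ ENNReal.ofReal (((β * wordDenom a ^ 2 * wordProd b)⁻¹) ^ σ) := by
        rw [← ENNReal.ofReal_rpow_of_pos (by positivity)]
        exact ENNReal.rpow_le_rpow hdiam hσ.le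
    _ ≤ _ := by
        rw [← ENNReal.ofReal_mul (by positivity)]
        exact ENNReal.ofReal_le_ofReal
          (inv_rpow_le_of_le_threshold hs1 hsσ hβ hq hP hx.2.2.2.2.1)

end StoppedCylinder

lemma exists_crossing {α : Type*} [LinearOrder α] {p t : ℕ → α} (h0 : p 0 ≤ t 0) {m : ℕ}
    (hm : 1 ≤ m) (hpm : t m ≤ p m) : ∃ k < m, p k ≤ t k ∧ t (k + 1) ≤ p (k + 1) := by
  induction m, hm using Nat.le_induction with
  | base => exact ⟨0, one_pos, h0, hpm⟩
  | succ m _ ih =>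
    rcases le_total (t m) (p m) with hm | hm
    · obtain ⟨k, hk, h⟩ := ih hm
      exact ⟨k, hk.trans m.lt_succ_self, h⟩
    · exact ⟨m, m.lt_succ_self, hm, hpm⟩

lemma exists_mem_stoppedCylinder {x : ℝ} (hx : x ∈ Ioo (0 : ℝ) 1) (hirr : Irrational x) (n : ℕ)
    {t : ℕ → ℝ} (ht : 1 ≤ t 0) {m : ℕ} (hm : 1 ≤ m)
    (hprod : t m ≤ ∏ i ∈ Finset.range m, (pq x (n + 1 + i) : ℝ)) :
    ∃ (k : Fin m) (a : Fin n → ℕ+) (b : Fin k → ℕ+), x ∈ stoppedCylinder a b (t k) (t (k + 1)) := by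
  obtain ⟨k, hkm, hle, hge⟩ := exists_crossing
    (p := fun k => ∏ i ∈ Finset.range k, (pq x (n + 1 + i) : ℝ)) (by simpa) hm hprod
  have hpos (i : ℕ) : 0 < pq x (i + 1) := one_le_pq_succ (iterate_gaussMap_mem_Ioo hx hirr i)
  set b : Fin k → ℕ+ := fun i => ⟨pq x (n + i + 1), hpos _⟩ with hb
  have hwordProd : wordProd b = ∏ i ∈ Finset.range k, (pq x (n + 1 + i) : ℝ) := by
    rw [wordProd, Finset.prod_range]
    simp only [hb, PNat.mk_coe, add_right_comm n 1]
  refine ⟨⟨k, hkm⟩, fun i => ⟨pq x (i + 1), hpos _⟩, b, hx, hirr, fun _ => rfl, fun _ => rfl,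
    hwordProd.trans_le hle, hge.trans_eq ?_⟩
  rw [hwordProd, Finset.prod_range_succ, add_right_comm n 1]

/-- The set `E_m(B)`. -/
def largeProductSet (m : ℕ) (B : ℝ) : Set ℝ :=
  {x | x ∈ Ioo (0 : ℝ) 1 ∧ Irrational x ∧
    {n : ℕ | B ^ n ≤ ∏ i ∈ Finset.range m, (pq x (n + i) : ℝ)}.Infinite}

/-- The covering of `E_m(B)`: the stopped cylinders whose thresholds `B ^ (c_k (n + 1))` are
given by the digit exponents, for words of length `n ≥ N`. -/
def stoppedCover (m : ℕ) (B s F : ℝ) (N : ℕ) :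
    (Σ n : ℕ, Σ k : Fin m, (Fin (n + N) → ℕ+) × (Fin k → ℕ+)) → Set ℝ :=
  fun ⟨n, k, a, b⟩ => stoppedCylinder a b (B ^ (digitExponent s F k * ((n + N : ℕ) + 1)))
    (B ^ (digitExponent s F (k + 1) * ((n + N : ℕ) + 1)))

lemma largeProductSet_subset_limsup_stoppedCover {m : ℕ} (hm : 1 ≤ m) (B : ℝ) {s F : ℝ}
    (hF : digitExponent s F m = 1) (N : ℕ) :
    largeProductSet m B ⊆ limsup (stoppedCover m B s F N) cofinite := by
  rintro x ⟨hx, hirr, hinf⟩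
  rw [cofinite.limsup_set_eq]
  have hinf' : {n : ℕ |
      B ^ (n + N + 1) ≤ ∏ i ∈ Finset.range m, (pq x (n + N + 1 + i) : ℝ)}.Infinite := by
    rw [← Nat.frequently_atTop_iff_infinite] at hinf ⊢
    rwa [← map_add_atTop_eq_nat (N + 1), frequently_map] at hinf
  refine Set.Infinite.of_image Sigma.fst (hinf'.mono fun n hn => ?_)
  obtain ⟨k, a, b, hmem⟩ := exists_mem_stoppedCylinder hx hirr (n + N)
    (t := fun k => B ^ (digitExponent s F k * ((n + N : ℕ) + 1))) (by simp [digitExponent]) hm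
    (by rw [hF, one_mul]; exact_mod_cast hn)
  exact ⟨⟨n, k, a, b⟩, hmem, rfl⟩

lemma threshold_rpow_mul_le {B s F : ℝ} (hB : 1 ≤ B) (hs : s ≠ 0) (hF : 0 ≤ F) (n k : ℕ) :
    (B ^ (digitExponent s F k * (n + 1))) ^ (1 - s) *
      (B ^ (digitExponent s F (k + 1) * (n + 1))) ^ (-s) ≤ B ^ (-(n : ℝ) * F) := by
  have hB0 := one_pos.trans_le hB
  rw [← Real.rpow_mul hB0.le, ← Real.rpow_mul hB0.le, ← Real.rpow_add hB0]
  refine Real.rpow_le_rpow_of_exponent_le hB ?_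
  linear_combination hF - ((n : ℝ) + 1) * mul_digitExponent_succ hs F k

lemma tsum_ediam_stoppedCover_le {m : ℕ} {B s σ F : ℝ} (hB : 1 ≤ B) (hs : 0 < s) (hs1 : s ≤ 1)
    (hsσ : s ≤ σ) (hF : 0 ≤ F) (N : ℕ) :
    ∑' i, Metric.ediam (stoppedCover m B s F N i) ^ σ ≤
      (∑' n, partitionSum B F σ (n + N)) *
        ∑ k : Fin m, ∑' b : Fin k → ℕ+, ENNReal.ofReal (wordProd b ^ (-(1 + (σ - s)))) := by
  rw [ENNReal.tsum_sigma', ← ENNReal.tsum_mul_right]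
  refine ENNReal.tsum_le_tsum fun n => ?_
  rw [ENNReal.tsum_sigma', tsum_fintype, Finset.mul_sum]
  refine Finset.sum_le_sum fun k _ => ?_
  rw [ENNReal.tsum_prod', partitionSum, ← ENNReal.tsum_mul_right]
  refine ENNReal.tsum_le_tsum fun a => ?_
  rw [← ENNReal.tsum_mul_left]
  refine ENNReal.tsum_le_tsum fun b => ?_
  have hq := wordDenom_pos a
  refine (ediam_stoppedCylinder_rpow_le hs hs1 hsσ (Real.one_le_rpow hB
    (mul_nonneg (digitExponent_nonneg hs hs1 hF _) (by positivity)))).trans ?_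
  gcongr
  exact threshold_rpow_mul_le hB hs.ne' hF (n + N) k

lemma dimH_largeProductSet_le {m : ℕ} (hm : 1 ≤ m) {B s σ : ℝ} (hB : 1 ≤ B) (hs : 0 < s)
    (hs1 : s ≤ 1) (hsσ : s < σ) (hpressure : NonposPressure B (fIter s (m - 1)) s) :
    dimH (largeProductSet m B) ≤ ENNReal.ofReal σ := by
  have hσ := hs.trans hsσ
  obtain ⟨N, hN⟩ := hpressure.exists_tsum_partitionSum_ne_top (one_pos.trans_le hB) hsσ
  have hsum := ne_top_of_le_ne_top
    (ENNReal.mul_ne_top hN (ENNReal.sum_ne_top.2 fun k _ =>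
      tsum_wordProd_rpow_ne_top (lt_add_of_pos_right 1 (sub_pos.2 hsσ)) _))
    (tsum_ediam_stoppedCover_le (m := m) hB hs hs1 hsσ.le (fIter_pos hs hs1 _).le N)
  have hnull : μH[σ] (largeProductSet m B) = 0 := measure_mono_null
    (largeProductSet_subset_limsup_stoppedCover hm B (digitExponent_fIter_pred hs hs1 hm) N)
    (hausdorffMeasure_limsup_cofinite_eq_zero hσ hsum)
  refine dimH_le_of_hausdorffMeasure_ne_top (d := σ.toNNReal) ?_
  rw [Real.coe_toNNReal _ hσ.le, hnull]
  exact ENNReal.zero_ne_top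

lemma nonposPressure_fIter_one {B : ℝ} (hB : 1 ≤ B) (j : ℕ) : NonposPressure B (fIter 1 j) 1 := by
  rw [fIter_one]
  exact nonposPressure_one hB zero_le_one

theorem dimH_largeProductSet_le_tExpM {m : ℕ} (hm : 1 ≤ m) {B : ℝ} (hB : 1 ≤ B) :
    dimH (largeProductSet m B) ≤ ENNReal.ofReal (tExpM B m) := by
  have hone : (1 : ℝ) ∈ {s : ℝ | 0 ≤ s ∧ s ≤ 1 ∧ NonposPressure B (fIter s (m - 1)) s} :=
    ⟨zero_le_one, le_rfl, nonposPressure_fIter_one hB _⟩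
  refine le_of_forall_gt_imp_ge_of_dense fun c hc => ?_
  rcases eq_or_ne c ⊤ with rfl | hc_top
  · exact le_top
  obtain ⟨s, ⟨hs, hs1, hpressure⟩, hsc⟩ := exists_lt_of_csInf_lt ⟨1, hone⟩
    ((ENNReal.ofReal_lt_iff_lt_toReal (Real.sInf_nonneg fun _ h => h.1) hc_top).1 hc)
  have hs0 : s ≠ 0 := by
    rintro rfl
    rw [fIter_zero] at hpressure
    exact not_nonposPressure_zero B hpressure
  exact (dimH_largeProductSet_le hm hB (hs.lt_of_ne' hs0) hs1 hsc hpressure).trans_eq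
    (ENNReal.ofReal_toReal hc_top)

/-! ### Finite continued fractions -/

/-- The finite continued fraction `1 / (a₁ + 1 / (a₂ + ⋯ + 1 / (aₙ + z)))` with tail `z`. -/
noncomputable def cfEval (l : List ℕ+) (z : ℝ) : ℝ :=
  l.foldr (fun (a : ℕ+) y => 1 / ((a : ℕ) + y)) z

lemma cfEval_cons (a : ℕ+) (l : List ℕ+) (z : ℝ) :
    cfEval (a :: l) z = 1 / ((a : ℕ) + cfEval l z) := rfl

lemma cfEval_singleton (a : ℕ+) (z : ℝ) : cfEval [a] z = 1 / ((a : ℕ) + z) := rfl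

lemma cfEval_append (l l' : List ℕ+) (z : ℝ) : cfEval (l ++ l') z = cfEval l (cfEval l' z) :=
  List.foldr_append

lemma one_div_natCast_add_mem_Ioc (a : ℕ+) {z : ℝ} (hz : 0 ≤ z) :
    1 / ((a : ℕ) + z) ∈ Ioc (0 : ℝ) (1 / (a : ℕ)) := by
  have ha : (0 : ℝ) < (a : ℕ) := mod_cast a.pos
  exact ⟨by positivity, one_div_le_one_div_of_le ha (le_add_of_nonneg_right hz)⟩

lemma one_div_natCast_add_mem_Ioo (a : ℕ+) {z : ℝ} (hz : 0 < z) :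
    1 / ((a : ℕ) + z) ∈ Ioo (0 : ℝ) 1 := by
  have ha : (1 : ℝ) ≤ (a : ℕ) := mod_cast a.2
  exact ⟨by positivity, by rw [div_lt_one (by positivity)]; linarith⟩

lemma cfEval_mem_Icc (l : List ℕ+) {z : ℝ} (hz : z ∈ Icc (0 : ℝ) 1) :
    cfEval l z ∈ Icc (0 : ℝ) 1 := by
  induction l with
  | nil => exact hz
  | cons a l ih =>
    have h := one_div_natCast_add_mem_Ioc a ih.1
    exact ⟨h.1.le, h.2.trans (div_le_one_of_le₀ (mod_cast a.2) (Nat.cast_nonneg _))⟩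

lemma cfEval_pos_of_ne_nil {l : List ℕ+} (hl : l ≠ []) {z : ℝ} (hz : z ∈ Icc (0 : ℝ) 1) :
    0 < cfEval l z := by
  obtain ⟨a, l, rfl⟩ := List.exists_cons_of_ne_nil hl
  exact (one_div_natCast_add_mem_Ioc a (cfEval_mem_Icc l hz).1).1

lemma cfEval_mem_Ioo (l : List ℕ+) {z : ℝ} (hz : z ∈ Ioo (0 : ℝ) 1) :
    cfEval l z ∈ Ioo (0 : ℝ) 1 := by
  induction l with
  | nil => exact hz
  | cons a l ih => exact one_div_natCast_add_mem_Ioo a ih.1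

lemma cfEval_mem_Ioo_of_ne_nil {l : List ℕ+} (hl : l ≠ []) {z : ℝ} (hz : 0 < z) :
    cfEval l z ∈ Ioo (0 : ℝ) 1 := by
  induction l with
  | nil => exact absurd rfl hl
  | cons a l ih =>
    rcases eq_or_ne l [] with rfl | hl'
    · exact one_div_natCast_add_mem_Ioo a hz
    · exact one_div_natCast_add_mem_Ioo a (ih hl').1

lemma continuousOn_cfEval (l : List ℕ+) : ContinuousOn (cfEval l) (Icc (0 : ℝ) 1) := by
  induction l with
  | nil => exact continuousOn_id
  | cons a l ih =>
    refine ContinuousOn.div continuousOn_const (continuousOn_const.add ih) fun z hz => ?_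
    have ha : (0 : ℝ) < (a : ℕ) := mod_cast a.pos
    exact (add_pos_of_pos_of_nonneg ha (cfEval_mem_Icc l hz).1).ne'

lemma floor_one_div_cfEval_cons (a : ℕ+) (l : List ℕ+) {z : ℝ} (hz : z ∈ Ioo (0 : ℝ) 1) :
    ⌊1 / cfEval (a :: l) z⌋₊ = a := by
  have h := cfEval_mem_Ioo l hz
  rw [cfEval_cons, one_div_one_div, add_comm, Nat.floor_add_natCast h.1.le,
    Nat.floor_eq_zero.2 h.2, zero_add]

lemma gaussMap_cfEval_cons (a : ℕ+) (l : List ℕ+) {z : ℝ} (hz : z ∈ Ioo (0 : ℝ) 1) :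
    gaussMap (cfEval (a :: l) z) = cfEval l z := by
  have h := inv_eq_floor_add_gaussMap (cfEval_mem_Ioo (a :: l) hz).1.le
  rw [floor_one_div_cfEval_cons a l hz, cfEval_cons, one_div, inv_inv] at h
  rw [cfEval_cons, one_div]
  exact (add_left_cancel h).symm

lemma iterate_gaussMap_cfEval_append (l l' : List ℕ+) {z : ℝ} (hz : z ∈ Ioo (0 : ℝ) 1) :
    gaussMap^[l.length] (cfEval (l ++ l') z) = cfEval l' z := by
  induction l with
  | nil => rfl
  | cons a l ih =>
    rw [List.length_cons, Function.iterate_succ_apply, List.cons_append,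
      gaussMap_cfEval_cons a _ hz, ih]

lemma iterate_gaussMap_cfEval {l : List ℕ+} {z : ℝ} (hz : z ∈ Ioo (0 : ℝ) 1) {i : ℕ}
    (hi : i ≤ l.length) : gaussMap^[i] (cfEval l z) = cfEval (l.drop i) z := by
  have h := iterate_gaussMap_cfEval_append (l.take i) (l.drop i) hz
  rwa [List.take_append_drop, List.length_take_of_le hi] at h

lemma iterate_gaussMap_cfEval_mem_Ioo {l : List ℕ+} {z : ℝ} (hz : z ∈ Ioo (0 : ℝ) 1) {i : ℕ}
    (hi : i ≤ l.length) : gaussMap^[i] (cfEval l z) ∈ Ioo (0 : ℝ) 1 := by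
  rw [iterate_gaussMap_cfEval hz hi]
  exact cfEval_mem_Ioo _ hz

lemma pq_cfEval {l : List ℕ+} {z : ℝ} (hz : z ∈ Ioo (0 : ℝ) 1) {i : ℕ} (hi : i < l.length) :
    pq (cfEval l z) (i + 1) = l[i] := by
  rw [pq_succ, iterate_gaussMap_cfEval hz hi.le, List.drop_eq_getElem_cons hi,
    floor_one_div_cfEval_cons _ _ hz]

lemma abs_sub_eq_abs_cfEval_sub_mul (l : List ℕ+) {z z' : ℝ} (hz : z ∈ Ioo (0 : ℝ) 1)
    (hz' : z' ∈ Ioo (0 : ℝ) 1) :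
    |z - z'| = |cfEval l z - cfEval l z'| *
      (invOrbitProd (cfEval l z) l.length * invOrbitProd (cfEval l z') l.length) := by
  have horbit {z : ℝ} (hz : z ∈ Ioo (0 : ℝ) 1) : gaussMap^[l.length] (cfEval l z) = z := by
    rw [iterate_gaussMap_cfEval hz le_rfl, List.drop_length]
    rfl
  rw [← abs_iterate_gaussMap_sub (fun i hi => (iterate_gaussMap_cfEval_mem_Ioo hz hi.le).1)
    (fun i hi => (iterate_gaussMap_cfEval_mem_Ioo hz' hi.le).1)
    fun i hi => by rw [pq_cfEval hz hi, pq_cfEval hz' hi], horbit hz, horbit hz']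

lemma exists_forall_lt_eq_apply_succ {K : Type*} [Nonempty K] (f : ℕ → K → K) (n : ℕ) :
    ∃ z : ℕ → K, ∀ t < n, z t = f t (z (t + 1)) := by
  induction n generalizing f with
  | zero => exact ⟨fun _ => Classical.arbitrary K, fun _ ht => absurd ht (Nat.not_lt_zero _)⟩
  | succ n ih =>
    obtain ⟨z, hz⟩ := ih fun t => f (t + 1)
    refine ⟨fun t => Nat.casesOn t (f 0 (z 0)) z, fun t ht => ?_⟩
    cases t with
    | zero => rfl
    | succ t => exact hz t (Nat.lt_of_succ_lt_succ ht)

lemma exists_forall_eq_apply_succ {K : Type*} [TopologicalSpace K] [CompactSpace K] [T2Space K]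
    [Nonempty K] {f : ℕ → K → K} (hf : ∀ t, Continuous (f t)) :
    ∃ z : ℕ → K, ∀ t, z t = f t (z (t + 1)) := by
  let S : ℕ → Set (ℕ → K) := fun n => {z | ∀ t < n, z t = f t (z (t + 1))}
  have hclosed (n : ℕ) : IsClosed (S n) := by
    simp only [S, ofPred_forall]
    exact isClosed_iInter fun t => isClosed_iInter fun _ =>
      isClosed_eq (continuous_apply t) ((hf t).comp (continuous_apply (t + 1)))
  obtain ⟨z, hz⟩ := IsCompact.nonempty_iInter_of_sequence_nonempty_isCompact_isClosed S
    (fun n z hz t ht => hz t (ht.trans n.lt_succ_self)) (exists_forall_lt_eq_apply_succ f)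
    (hclosed 0).isCompact hclosed
  exact ⟨z, fun t => mem_iInter.1 hz (t + 1) t t.lt_succ_self⟩

lemma exists_eq_cfEval_succ {w : ℕ → List ℕ+} (hw : ∀ t, w t ≠ []) :
    ∃ z : ℕ → ℝ, ∀ t, z t ∈ Ioo (0 : ℝ) 1 ∧ z t = cfEval (w t) (z (t + 1)) := by
  obtain ⟨z, hz⟩ := exists_forall_eq_apply_succ (K := Icc (0 : ℝ) 1)
    (f := fun t => MapsTo.restrict (cfEval (w t)) _ _ fun _ => cfEval_mem_Icc (w t))
    fun t => (continuousOn_cfEval (w t)).mapsToRestrict _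
  have heval (t : ℕ) : (z t : ℝ) = cfEval (w t) (z (t + 1)) := congrArg Subtype.val (hz t)
  have hpos (t : ℕ) : 0 < (z t : ℝ) := by
    rw [heval t]
    exact cfEval_pos_of_ne_nil (hw t) (z (t + 1)).2
  have hmem (t : ℕ) : (z t : ℝ) ∈ Ioo (0 : ℝ) 1 := by
    rw [heval t]
    exact cfEval_mem_Ioo_of_ne_nil (hw t) (hpos (t + 1))
  exact ⟨fun t => z t, fun t => ⟨hmem t, heval t⟩⟩

/-! ### Blocks -/

lemma invOrbitProd_cfEval_append (l l' : List ℕ+) {z : ℝ} (hz : z ∈ Ioo (0 : ℝ) 1) :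
    invOrbitProd (cfEval (l ++ l') z) (l ++ l').length =
      invOrbitProd (cfEval l (cfEval l' z)) l.length *
        invOrbitProd (cfEval l' z) l'.length := by
  rw [List.length_append, invOrbitProd_add, iterate_gaussMap_cfEval_append l l' hz, cfEval_append]

lemma invOrbitProd_cfEval_singleton (a : ℕ+) (z : ℝ) :
    invOrbitProd (cfEval [a] z) [a].length = (a : ℕ) + z := by
  rw [List.length_singleton, invOrbitProd, Finset.prod_range_one, Function.iterate_zero, id,
    cfEval_singleton, one_div, inv_inv]

lemma invOrbitProd_cfEval_pos (l : List ℕ+) {z : ℝ} (hz : z ∈ Ioo (0 : ℝ) 1) :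
    0 < invOrbitProd (cfEval l z) l.length :=
  invOrbitProd_pos fun _ hi => (iterate_gaussMap_cfEval_mem_Ioo hz hi.le).1

lemma invOrbitProd_cfEval_ofFn_le {n : ℕ} (w : Fin n → ℕ+) {z : ℝ} (hz : z ∈ Ioo (0 : ℝ) 1) :
    invOrbitProd (cfEval (List.ofFn w) z) (List.ofFn w).length ≤ 2 * wordDenom w := by
  have hdenom : cfDenom (cfEval (List.ofFn w) z) n = contQ n fun i => (w i : ℕ) := by
    unfold cfDenom
    congr 1
    funext i
    rw [pq_cfEval hz (by rw [List.length_ofFn]; exact i.2), List.getElem_ofFn]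
  rw [List.length_ofFn]
  have h := invOrbitProd_le_two_mul_cfDenom (x := cfEval (List.ofFn w) z) (n := n) fun i hi =>
    iterate_gaussMap_cfEval_mem_Ioo hz (by rw [List.length_ofFn]; exact hi.le)
  rwa [hdenom, ← wordDenom] at h

lemma eq_of_cfEval_eq {l l' : List ℕ+} (hlen : l.length = l'.length) {z z' : ℝ}
    (hz : z ∈ Ioo (0 : ℝ) 1) (hz' : z' ∈ Ioo (0 : ℝ) 1) (h : cfEval l z = cfEval l' z') :
    l = l' :=
  List.ext_getElem hlen fun i hi hi' => PNat.coe_injective <| by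
    rw [← pq_cfEval hz hi, h, pq_cfEval hz' hi']

lemma exists_pos_le_abs_cfEval_sub {l l' : List ℕ+} (hlen : l.length = l'.length) (hne : l ≠ l')
    {K : Set ℝ} (hK : IsCompact K) (hsub : K ⊆ Ioo 0 1) :
    ∃ c > 0, ∀ z ∈ K, ∀ z' ∈ K, c ≤ |cfEval l z - cfEval l' z'| := by
  have hcompact (l : List ℕ+) : IsCompact (cfEval l '' K) :=
    hK.image_of_continuousOn ((continuousOn_cfEval l).mono (hsub.trans Ioo_subset_Icc_self))
  have hdisj : Disjoint (cfEval l '' K) (cfEval l' '' K) := by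
    rw [Set.disjoint_left]
    rintro _ ⟨z, hz, rfl⟩ ⟨z', hz', h⟩
    exact hne (eq_of_cfEval_eq hlen (hsub hz) (hsub hz') h.symm)
  obtain ⟨c, hc, hlt⟩ := Metric.exists_pos_forall_lt_edist (hcompact l) (hcompact l').isClosed hdisj
  refine ⟨c, hc, fun z hz z' hz' => ?_⟩
  have h := hlt _ (mem_image_of_mem _ hz) _ (mem_image_of_mem _ hz')
  rw [edist_nndist, ENNReal.coe_lt_coe, ← NNReal.coe_lt_coe, coe_nndist, Real.dist_eq] at h
  exact h.le

/-- The word `2 w 2`. Framing `w` by the digit `2` keeps the value and the tail away from `0`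
and `1` at the cost of a bounded factor in the denominator. -/
def blockWord {n : ℕ} (w : Fin n → ℕ+) : List ℕ+ := 2 :: List.ofFn w ++ [2]

lemma length_blockWord {n : ℕ} (w : Fin n → ℕ+) : (blockWord w).length = n + 2 := by
  simp [blockWord]

lemma blockWord_injective {n : ℕ} : Function.Injective (blockWord (n := n)) := fun _ _ h =>
  List.ofFn_injective (List.tail_eq_of_cons_eq (List.append_cancel_right h))

lemma cfEval_blockWord_le_half {n : ℕ} (w : Fin n → ℕ+) {z : ℝ} (hz : z ∈ Ioo (0 : ℝ) 1) :
    cfEval (blockWord w) z ≤ 1 / 2 :=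
  (one_div_natCast_add_mem_Ioc 2 (cfEval_mem_Ioo (List.ofFn w ++ [2]) hz).1.le).2.trans_eq
    (by norm_num)

lemma invOrbitProd_cfEval_blockWord_le {n : ℕ} (w : Fin n → ℕ+) {z : ℝ}
    (hz : z ∈ Ioo (0 : ℝ) 1) :
    invOrbitProd (cfEval (blockWord w) z) (blockWord w).length ≤ 18 * wordDenom w := by
  have htail := cfEval_mem_Ioo [2] hz
  have hmid := cfEval_mem_Ioo (List.ofFn w) htail
  have hle {z : ℝ} (hz : z ∈ Ioo (0 : ℝ) 1) :
      invOrbitProd (cfEval [2] z) [(2 : ℕ+)].length ≤ 3 := by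
    rw [invOrbitProd_cfEval_singleton]
    norm_num
    linarith [hz.2]
  calc invOrbitProd (cfEval (blockWord w) z) (blockWord w).length
      = invOrbitProd (cfEval [2] (cfEval (List.ofFn w) (cfEval [2] z))) [(2 : ℕ+)].length *
          invOrbitProd (cfEval (List.ofFn w) (cfEval [2] z)) (List.ofFn w).length *
          invOrbitProd (cfEval [2] z) [(2 : ℕ+)].length := by
        rw [blockWord, invOrbitProd_cfEval_append _ _ hz, ← List.singleton_append,
          invOrbitProd_cfEval_append _ _ htail]
    _ ≤ 3 * (2 * wordDenom w) * 3 := by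
        have := wordDenom_pos w
        gcongr
        · exact (invOrbitProd_cfEval_pos _ hz).le
        · exact (invOrbitProd_cfEval_pos _ htail).le
        · exact hle hmid
        · exact invOrbitProd_cfEval_ofFn_le w htail
        · exact hle hz
    _ = 18 * wordDenom w := by ring

lemma abs_sub_le_mul_abs_cfEval_blockWord_sub {n : ℕ} (w : Fin n → ℕ+) {z z' : ℝ}
    (hz : z ∈ Ioo (0 : ℝ) 1) (hz' : z' ∈ Ioo (0 : ℝ) 1) :
    |z - z'| ≤ (18 * wordDenom w) ^ 2 * |cfEval (blockWord w) z - cfEval (blockWord w) z'| := by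
  rw [abs_sub_eq_abs_cfEval_sub_mul (blockWord w) hz hz', mul_comm, sq]
  have := wordDenom_pos w
  gcongr
  · exact (invOrbitProd_cfEval_pos _ hz').le
  · exact invOrbitProd_cfEval_blockWord_le w hz
  · exact invOrbitProd_cfEval_blockWord_le w hz'

lemma exists_pos_le_abs_cfEval_blockWord_sub {n : ℕ} (A : Finset (Fin n → ℕ+)) :
    ∃ c > 0, ∀ w ∈ A, ∀ w' ∈ A, w ≠ w' → ∀ z ∈ Ioo (0 : ℝ) 1, ∀ z' ∈ Ioo (0 : ℝ) 1,
      c ≤ |cfEval (blockWord w) z - cfEval (blockWord w') z'| := by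
  have htail {z : ℝ} (hz : z ∈ Ioo (0 : ℝ) 1) : cfEval [2] z ∈ Icc (1 / 3 : ℝ) (1 / 2) := by
    have h2 : (((2 : ℕ+) : ℕ) : ℝ) = 2 := by norm_num
    rw [cfEval_singleton, h2]
    exact ⟨one_div_le_one_div_of_le (by linarith [hz.1]) (by linarith [hz.2]),
      one_div_le_one_div_of_le two_pos (by linarith [hz.1])⟩
  have hpair (w w' : Fin n → ℕ+) : ∀ᶠ c in nhdsWithin (0 : ℝ) (Ioi 0), w ≠ w' →
      ∀ z ∈ Ioo (0 : ℝ) 1, ∀ z' ∈ Ioo (0 : ℝ) 1,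
        c ≤ |cfEval (blockWord w) z - cfEval (blockWord w') z'| := by
    by_cases hne : w = w'
    · exact Eventually.of_forall fun _ h => absurd hne h
    obtain ⟨c, hc, hle⟩ := exists_pos_le_abs_cfEval_sub (l := 2 :: List.ofFn w)
      (l' := 2 :: List.ofFn w') (by simp)
      (fun h => hne (List.ofFn_injective (List.tail_eq_of_cons_eq h))) isCompact_Icc
      (Icc_subset_Ioo (show (0 : ℝ) < 1 / 3 by norm_num) (show (1 / 2 : ℝ) < 1 by norm_num))
    filter_upwards [Ioo_mem_nhdsGT hc] with d hd _ z hz z' hz'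
    rw [blockWord, blockWord, cfEval_append, cfEval_append]
    exact hd.2.le.trans (hle _ (htail hz) _ (htail hz'))
  have hall : ∀ᶠ c in nhdsWithin (0 : ℝ) (Ioi 0), ∀ w ∈ A, ∀ w' ∈ A, w ≠ w' →
      ∀ z ∈ Ioo (0 : ℝ) 1, ∀ z' ∈ Ioo (0 : ℝ) 1,
        c ≤ |cfEval (blockWord w) z - cfEval (blockWord w') z'| :=
    (Finset.eventually_all _).2 fun w _ => (Finset.eventually_all _).2 fun w' _ => hpair w w'
  obtain ⟨c, hle, hc⟩ := (hall.and self_mem_nhdsWithin).exists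
  exact ⟨c, hc, hle⟩

/-! ### Coding points by continued fractions -/

lemma mul_dimH_univ_le_dimH_range {Y Z : Type*} [EMetricSpace Y] [EMetricSpace Z] {f : Y → Z}
    {C r : NNReal} (hr : 0 < r) (hf : ∀ u v, edist u v ≤ C * edist (f u) (f v) ^ (r : ℝ)) :
    r * dimH (univ : Set Y) ≤ dimH (range f) := by
  have hsplit : HolderWith C r (rangeSplitting f) := fun x y => by
    simpa only [apply_rangeSplitting, ← Subtype.edist_eq] using
      hf (rangeSplitting f x) (rangeSplitting f y)
  have hsurj : range (rangeSplitting f) = univ := eq_univ_of_forall fun u =>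
    ⟨⟨f u, mem_range_self u⟩, edist_le_zero.1 <| (hf _ u).trans_eq <| by
      rw [apply_rangeSplitting f, edist_self, ENNReal.zero_rpow_of_pos (mod_cast hr), mul_zero]⟩
  have hdim : dimH (univ : Set (range f)) = dimH (range f) := by
    rw [← (isometry_subtype_coe (s := range f)).dimH_image, image_univ, Subtype.range_coe]
  have h := hsplit.dimH_range_le hr
  rwa [hsurj, hdim, ENNReal.le_div_iff_mul_le (Or.inl (mod_cast hr.ne'))
    (Or.inl ENNReal.coe_ne_top), mul_comm] at h

/-- One step of a coding of the points of `Y` by continued fractions: a point `y` contributes the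
digits `word y` and is then replaced by `shift y`. The positive numbers `contr y` and `expan y`
control the inverse branches of `shift` and of `cfEval (word y)`. -/
structure CodingLevel (Y : Type*) [MetricSpace Y] where
  word : Y → List ℕ+
  shift : Y → Y
  contr : Y → ℝ
  expan : Y → ℝ
  word_ne_nil : ∀ y, word y ≠ []
  cfEval_word_le_half : ∀ y, ∀ z ∈ Ioo (0 : ℝ) 1, cfEval (word y) z ≤ 1 / 2
  contr_pos : ∀ y, 0 < contr y
  expan_pos : ∀ y, 0 < expan y
  dist_le_contr_mul : ∀ y y', word y = word y' → dist y y' ≤ contr y * dist (shift y) (shift y')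
  abs_sub_le_expan_mul : ∀ y, ∀ z ∈ Ioo (0 : ℝ) 1, ∀ z' ∈ Ioo (0 : ℝ) 1,
    |z - z'| ≤ expan y * |cfEval (word y) z - cfEval (word y) z'|

namespace CodingLevel

variable {Y : Type*} [MetricSpace Y] (ℓ : ℕ → CodingLevel Y)

/-- The successive images of `u` under the shifts of the levels `ℓ 0, ℓ 1, …`. -/
def orbit (u : Y) : ℕ → Y
  | 0 => u
  | t + 1 => (ℓ t).shift (orbit u t)

/-- `z t` is the value of the continued fraction formed by the words that the levels
`ℓ t, ℓ (t + 1), …` read off the orbit of `u`. -/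
def IsTailSeq (u : Y) (z : ℕ → ℝ) : Prop :=
  ∀ t, z t ∈ Ioo (0 : ℝ) 1 ∧ z t = cfEval ((ℓ t).word (orbit ℓ u t)) (z (t + 1))

/-- `z t` is a number in `(0, 1)` whose continued fraction expansion is a concatenation of words of
the levels `ℓ t, ℓ (t + 1), …`, in this order. -/
def IsCodedSeq (z : ℕ → ℝ) : Prop :=
  ∀ t, z t ∈ Ioo (0 : ℝ) 1 ∧ ∃ y, z t = cfEval ((ℓ t).word y) (z (t + 1))

/-- The numbers whose continued fraction expansion is a concatenation of words of the levels
`ℓ 0, ℓ 1, …`, in this order. -/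
def codedSet : Set ℝ :=
  {x | ∃ z : ℕ → ℝ, z 0 = x ∧ IsCodedSeq ℓ z}

variable {ℓ}

lemma exists_isTailSeq (u : Y) : ∃ z, IsTailSeq ℓ u z :=
  exists_eq_cfEval_succ fun t => (ℓ t).word_ne_nil (orbit ℓ u t)

lemma IsTailSeq.mem_codedSet {u : Y} {z : ℕ → ℝ} (hz : IsTailSeq ℓ u z) : z 0 ∈ codedSet ℓ :=
  ⟨z, rfl, fun t => ⟨(hz t).1, _, (hz t).2⟩⟩

lemma IsTailSeq.mem_Ioc {u : Y} {z : ℕ → ℝ} (hz : IsTailSeq ℓ u z) (t : ℕ) :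
    z t ∈ Ioc (0 : ℝ) (1 / 2) :=
  ⟨(hz t).1.1, (hz t).2.trans_le ((ℓ t).cfEval_word_le_half _ _ (hz (t + 1)).1)⟩

variable {u v : Y} {z z' : ℕ → ℝ} {t : ℕ}

lemma dist_le_prod_contr_mul
    (h : ∀ i < t, (ℓ i).word (orbit ℓ u i) = (ℓ i).word (orbit ℓ v i)) :
    dist u v ≤ (∏ i ∈ Finset.range t, (ℓ i).contr (orbit ℓ u i)) *
      dist (orbit ℓ u t) (orbit ℓ v t) := by
  induction t with
  | zero => rw [Finset.prod_range_zero, one_mul]; rfl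
  | succ t ih =>
    rw [Finset.prod_range_succ, mul_assoc]
    refine (ih fun i hi => h i (hi.trans t.lt_succ_self)).trans
      (mul_le_mul_of_nonneg_left ?_ (Finset.prod_nonneg fun i _ => ((ℓ i).contr_pos _).le))
    exact (ℓ t).dist_le_contr_mul _ _ (h t t.lt_succ_self)

lemma abs_tail_sub_le_prod_expan_mul (hz : IsTailSeq ℓ u z) (hz' : IsTailSeq ℓ v z')
    (h : ∀ i < t, (ℓ i).word (orbit ℓ u i) = (ℓ i).word (orbit ℓ v i)) :
    |z t - z' t| ≤ (∏ i ∈ Finset.range t, (ℓ i).expan (orbit ℓ u i)) * |z 0 - z' 0| := by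
  induction t with
  | zero => rw [Finset.prod_range_zero, one_mul]
  | succ t ih =>
    have hstep := (ℓ t).abs_sub_le_expan_mul (orbit ℓ u t) _ (hz (t + 1)).1 _ (hz' (t + 1)).1
    rw [← (hz t).2, h t t.lt_succ_self, ← (hz' t).2] at hstep
    rw [Finset.prod_range_succ, mul_right_comm, mul_comm]
    exact hstep.trans (mul_le_mul_of_nonneg_left
      (ih fun i hi => h i (hi.trans t.lt_succ_self)) ((ℓ t).expan_pos _).le)

lemma eq_of_forall_word_eq [BoundedSpace Y] {κ : ℝ} (hκ : κ < 1)
    (hcontr : ∀ t y, (ℓ t).contr y ≤ κ)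
    (h : ∀ i, (ℓ i).word (orbit ℓ u i) = (ℓ i).word (orbit ℓ v i)) : u = v := by
  have hκ0 : 0 ≤ κ := ((ℓ 0).contr_pos u).le.trans (hcontr 0 u)
  have hbound (t : ℕ) : dist u v ≤ κ ^ t * Metric.diam (univ : Set Y) :=
    calc dist u v ≤ (∏ i ∈ Finset.range t, (ℓ i).contr (orbit ℓ u i)) *
          dist (orbit ℓ u t) (orbit ℓ v t) := dist_le_prod_contr_mul fun i _ => h i
      _ ≤ κ ^ t * Metric.diam (univ : Set Y) := by
        gcongr
        · refine (Finset.prod_le_prod (fun i _ => ((ℓ i).contr_pos _).le)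
            fun i _ => hcontr i _).trans_eq ?_
          rw [Finset.prod_const, Finset.card_range]
        · exact Metric.dist_le_diam_of_mem (BoundedSpace.bounded_univ) (mem_univ _) (mem_univ _)
  have hlim := (tendsto_pow_atTop_nhds_zero_of_lt_one hκ0 hκ).mul_const
    (Metric.diam (univ : Set Y))
  rw [zero_mul] at hlim
  exact dist_le_zero.1 (ge_of_tendsto' hlim hbound)

variable {s κ C : ℝ} {r : ℕ → ℝ}

/-- The separation condition at level `t`: once all earlier words agree, points of `Y` whose words
differ have `s`-Hölder separated codes, at the scale `∏ i < t, r i` reached so far. -/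
def IsSeparated (ℓ : ℕ → CodingLevel Y) (s C : ℝ) (r : ℕ → ℝ) : Prop :=
  ∀ t y y', (ℓ t).word y ≠ (ℓ t).word y' →
    ∀ z ∈ Ioc (0 : ℝ) (1 / 2), ∀ z' ∈ Ioc (0 : ℝ) (1 / 2),
      (∏ i ∈ Finset.range t, r i) * dist y y' ≤
        C * |cfEval ((ℓ t).word y) z - cfEval ((ℓ t).word y') z'| ^ s

lemma dist_le_of_word_ne (hs : 0 ≤ s) (hC : 0 ≤ C) (hr : ∀ t, 0 < r t)
    (hratio : ∀ t y, (ℓ t).contr y * (ℓ t).expan y ^ s ≤ r t) (hsep : IsSeparated ℓ s C r)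
    (hz : IsTailSeq ℓ u z) (hz' : IsTailSeq ℓ v z')
    (h : ∀ i < t, (ℓ i).word (orbit ℓ u i) = (ℓ i).word (orbit ℓ v i))
    (hne : (ℓ t).word (orbit ℓ u t) ≠ (ℓ t).word (orbit ℓ v t)) :
    dist u v ≤ C * |z 0 - z' 0| ^ s := by
  set μ := ∏ i ∈ Finset.range t, (ℓ i).contr (orbit ℓ u i)
  set Q := ∏ i ∈ Finset.range t, (ℓ i).expan (orbit ℓ u i)
  set R := ∏ i ∈ Finset.range t, r i
  have hμ : 0 < μ := Finset.prod_pos fun i _ => (ℓ i).contr_pos _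
  have hQ : 0 < Q := Finset.prod_pos fun i _ => (ℓ i).expan_pos _
  have hR : 0 < R := Finset.prod_pos fun i _ => hr i
  have hμQ : μ * Q ^ s ≤ R := by
    rw [← Real.finsetProd_rpow _ _ fun i _ => ((ℓ i).expan_pos _).le, ← Finset.prod_mul_distrib]
    refine Finset.prod_le_prod (fun i _ => ?_) fun i _ => hratio i _
    exact mul_nonneg ((ℓ i).contr_pos _).le (Real.rpow_nonneg ((ℓ i).expan_pos _).le _)
  have hdiff := hsep t _ _ hne _ (hz.mem_Ioc (t + 1)) _ (hz'.mem_Ioc (t + 1))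
  rw [← (hz t).2, ← (hz' t).2] at hdiff
  have htail : |z t - z' t| ^ s ≤ Q ^ s * |z 0 - z' 0| ^ s := by
    rw [← Real.mul_rpow hQ.le (abs_nonneg _)]
    exact Real.rpow_le_rpow (abs_nonneg _) (abs_tail_sub_le_prod_expan_mul hz hz' h) hs
  refine le_of_mul_le_mul_left ?_ hR
  calc R * dist u v ≤ R * (μ * dist (orbit ℓ u t) (orbit ℓ v t)) := by
        gcongr; exact dist_le_prod_contr_mul h
    _ = μ * (R * dist (orbit ℓ u t) (orbit ℓ v t)) := mul_left_comm _ _ _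
    _ ≤ μ * (C * (Q ^ s * |z 0 - z' 0| ^ s)) := by grw [hdiff, htail]
    _ = μ * Q ^ s * (C * |z 0 - z' 0| ^ s) := by ring
    _ ≤ R * (C * |z 0 - z' 0| ^ s) := by gcongr

theorem ofReal_mul_dimH_univ_le_dimH_codedSet [BoundedSpace Y] (hs : 0 < s) (hκ : κ < 1)
    (hC : 0 ≤ C) (hr : ∀ t, 0 < r t) (hcontr : ∀ t y, (ℓ t).contr y ≤ κ)
    (hratio : ∀ t y, (ℓ t).contr y * (ℓ t).expan y ^ s ≤ r t) (hsep : IsSeparated ℓ s C r) :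
    ENNReal.ofReal s * dimH (univ : Set Y) ≤ dimH (codedSet ℓ) := by
  classical
  choose z hz using fun u : Y => exists_isTailSeq (ℓ := ℓ) u
  have hdist (u v : Y) : dist u v ≤ C * |z u 0 - z v 0| ^ s := by
    by_cases hall : ∀ i, (ℓ i).word (orbit ℓ u i) = (ℓ i).word (orbit ℓ v i)
    · rw [eq_of_forall_word_eq hκ hcontr hall, dist_self]
      positivity
    · push Not at hall
      exact dist_le_of_word_ne hs.le hC hr hratio hsep (hz u) (hz v)
        (fun i hi => not_not.1 (Nat.find_min hall hi)) (Nat.find_spec hall)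
  have hedist (u v : Y) : edist u v ≤
      C.toNNReal * edist (z u 0) (z v 0) ^ (s.toNNReal : ℝ) := by
    rw [edist_dist, edist_dist, Real.dist_eq, Real.coe_toNNReal s hs.le,
      ENNReal.ofReal_rpow_of_nonneg (abs_nonneg _) hs.le]
    change _ ≤ ENNReal.ofReal C * _
    rw [← ENNReal.ofReal_mul hC]
    exact ENNReal.ofReal_le_ofReal (hdist u v)
  exact (mul_dimH_univ_le_dimH_range (Real.toNNReal_pos.2 hs) hedist).trans
    (dimH_mono (range_subset_iff.2 fun u => (hz u).mem_codedSet))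

end CodingLevel

/-! ### Digit and block levels -/

lemma exists_finset_one_lt_sum_of_lt_partitionSum {B F s c : ℝ} {n : ℕ} (hB : 0 < B) (hc : 0 ≤ c)
    (h : 1 < ENNReal.ofReal c * partitionSum B F s n) :
    ∃ A : Finset (Fin n → ℕ+),
      1 < ∑ w ∈ A, c * (B ^ (-(n : ℝ) * F) * wordDenom w ^ (-(2 * s))) := by
  have hterm (w : Fin n → ℕ+) : 0 ≤ c * (B ^ (-(n : ℝ) * F) * wordDenom w ^ (-(2 * s))) := by
    have := wordDenom_pos w
    positivity
  rw [partitionSum, ← ENNReal.tsum_mul_left, ENNReal.tsum_eq_iSup_sum, lt_iSup_iff] at h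
  obtain ⟨A, hA⟩ := h
  refine ⟨A, ?_⟩
  simp_rw [← ENNReal.ofReal_mul hc] at hA
  rwa [← ENNReal.ofReal_sum_of_nonneg fun w _ => hterm w, ENNReal.one_lt_ofReal] at hA

theorem exists_block_alphabet {B F s : ℝ} (hB : 0 < B) (h : ¬NonposPressure B F s) :
    ∃ (n : ℕ) (A : Finset (Fin n → ℕ+)) (ρ : ℝ), 0 < ρ ∧ ρ * B ^ (F * (n + 2 : ℕ)) < 1 ∧
      1 ≤ ∑ w ∈ A, ρ * (18 * wordDenom w) ^ (-(2 * s)) := by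
  obtain ⟨δ, hδ, hfreq⟩ := exists_frequently_le_partitionSum h
  -- half of the exponential growth pays for the two extra digits of a block and the constant `18`
  set c : ℝ := Real.exp (-δ) * B ^ (-(2 * F)) * 18 ^ (-(2 * s)) with hc_def
  have hc : 0 < c := by positivity
  have hlim : Tendsto (fun n : ℕ => c * Real.exp (δ / 2 * n)) atTop atTop :=
    (Real.tendsto_exp_atTop.comp
      (tendsto_natCast_atTop_atTop.const_mul_atTop (half_pos hδ))).const_mul_atTop hc
  obtain ⟨n, hn, hlarge⟩ := (hfreq.and_eventually (hlim.eventually_gt_atTop 1)).exists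
  have hmass : 1 < ENNReal.ofReal (c * Real.exp (-(δ / 2 * n))) * partitionSum B F s n := by
    refine lt_of_lt_of_le ?_ (mul_le_mul_right hn _)
    rwa [← ENNReal.ofReal_mul (by positivity), mul_assoc, ← Real.exp_add,
      show -(δ / 2 * (n : ℝ)) + δ * n = δ / 2 * n by ring, ENNReal.one_lt_ofReal]
  obtain ⟨A, hA⟩ := exists_finset_one_lt_sum_of_lt_partitionSum hB (by positivity) hmass
  refine ⟨n, A, Real.exp (-(δ / 2 * (n + 2 : ℕ))) * B ^ (-(F * (n + 2 : ℕ))), by positivity, ?_, ?_⟩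
  · rw [mul_assoc, ← Real.rpow_add hB, neg_add_cancel, Real.rpow_zero, mul_one,
      Real.exp_lt_one_iff, neg_lt_zero]
    positivity
  · refine hA.le.trans_eq (Finset.sum_congr rfl fun w _ => ?_)
    have hexp : Real.exp (-(δ / 2 * (n + 2 : ℕ))) = Real.exp (-δ) * Real.exp (-(δ / 2 * n)) := by
      rw [← Real.exp_add]; congr 1; push_cast; ring
    have hpow : B ^ (-(F * (n + 2 : ℕ))) = B ^ (-(2 * F)) * B ^ (-(n : ℝ) * F) := by
      rw [← Real.rpow_add hB]; congr 1; push_cast; ring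
    rw [Real.mul_rpow (by norm_num) (wordDenom_pos w).le, hexp, hpow, hc_def]
    ring

-- Cut `[0, ∑ a ∈ A, p a)` into intervals of lengths `p a`: `D` tells which interval contains `y`,
-- and `G` rescales that interval to `[0, 1)`.
lemma exists_interval_coding {ι : Type*} [Nonempty ι] {p : ι → ℝ} {A : Finset ι}
    (hp : ∀ a ∈ A, 0 < p a) :
    ∃ (D : ℝ → ι) (G : ℝ → ℝ),
      (∀ y ∈ Ico 0 (∑ a ∈ A, p a), D y ∈ A ∧ G y ∈ Ico (0 : ℝ) 1) ∧
      ∀ y ∈ Ico 0 (∑ a ∈ A, p a), ∀ y' ∈ Ico 0 (∑ a ∈ A, p a), D y = D y' →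
        |y - y'| = p (D y) * |G y - G y'| := by
  classical
  induction A using Finset.induction_on with
  | empty => exact ⟨fun _ => Classical.arbitrary ι, fun _ => 0, by simp, by simp⟩
  | insert a A ha ih =>
    obtain ⟨D, G, hmem, hdist⟩ := ih fun b hb => hp b (Finset.mem_insert_of_mem hb)
    have hpa := hp a (Finset.mem_insert_self _ _)
    rw [Finset.sum_insert ha]
    set S := ∑ b ∈ A, p b
    refine ⟨fun y => if y < S then D y else a, fun y => if y < S then G y else (y - S) / p a,
      fun y hy => ?_, fun y hy y' hy' => ?_⟩
    · rcases lt_or_ge y S with hlt | hge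
      · simp only [hlt, if_true]
        exact ⟨Finset.mem_insert_of_mem (hmem y ⟨hy.1, hlt⟩).1, (hmem y ⟨hy.1, hlt⟩).2⟩
      · simp only [hge.not_gt, if_false]
        refine ⟨Finset.mem_insert_self _ _, div_nonneg (sub_nonneg.2 hge) hpa.le, ?_⟩
        rw [div_lt_one hpa]
        linarith [hy.2]
    · rcases lt_or_ge y S with hlt | hge <;> rcases lt_or_ge y' S with hlt' | hge'
      · simpa only [hlt, hlt', if_true] using hdist y ⟨hy.1, hlt⟩ y' ⟨hy'.1, hlt'⟩
      · simp only [hlt, hge'.not_gt, if_true, if_false]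
        exact fun h => absurd (h ▸ (hmem y ⟨hy.1, hlt⟩).1) ha
      · simp only [hge.not_gt, hlt', if_true, if_false]
        exact fun h => absurd (h ▸ (hmem y' ⟨hy'.1, hlt'⟩).1) ha
      · simp only [hge.not_gt, hge'.not_gt, if_false, forall_const]
        rw [← sub_div, abs_div, abs_of_pos hpa, mul_div_cancel₀ _ hpa.ne', sub_sub_sub_cancel_right]

lemma exists_unitInterval_coding {ι : Type*} {p : ι → ℝ} {A : Finset ι} (hp : ∀ a ∈ A, 0 < p a)
    (hA : 1 ≤ ∑ a ∈ A, p a) :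
    ∃ (D : Ico (0 : ℝ) 1 → ι) (G : Ico (0 : ℝ) 1 → Ico (0 : ℝ) 1), (∀ y, D y ∈ A) ∧
      ∀ y y', D y = D y' → dist y y' = p (D y) * dist (G y) (G y') := by
  obtain ⟨a, -⟩ := Finset.nonempty_of_sum_ne_zero (one_pos.trans_le hA).ne'
  have : Nonempty ι := ⟨a⟩
  obtain ⟨D, G, hmem, hdist⟩ := exists_interval_coding hp
  have hsub (y : Ico (0 : ℝ) 1) : (y : ℝ) ∈ Ico 0 (∑ a ∈ A, p a) := ⟨y.2.1, y.2.2.trans_le hA⟩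
  exact ⟨fun y => D y, fun y => ⟨G y, (hmem y (hsub y)).2⟩, fun y => (hmem y (hsub y)).1,
    fun y y' => hdist y (hsub y) y' (hsub y')⟩

lemma abs_sub_le_mul_abs_cfEval_singleton_sub (a : ℕ+) {z z' : ℝ} (hz : z ∈ Ioo (0 : ℝ) 1)
    (hz' : z' ∈ Ioo (0 : ℝ) 1) :
    |z - z'| ≤ ((a : ℕ) + 1) ^ 2 * |cfEval [a] z - cfEval [a] z'| := by
  rw [abs_sub_eq_abs_cfEval_sub_mul [a] hz hz', invOrbitProd_cfEval_singleton,
    invOrbitProd_cfEval_singleton, mul_comm, sq]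
  have := hz.1.le
  have := hz'.1.le
  gcongr
  exacts [hz.2.le, hz'.2.le]

lemma abs_natCast_sub_le_mul_abs_cfEval_singleton_sub {a b : ℕ+} {z z' : ℝ}
    (hz : z ∈ Ioc (0 : ℝ) (1 / 2)) (hz' : z' ∈ Ioc (0 : ℝ) (1 / 2)) :
    |((a : ℕ) : ℝ) - (b : ℕ)| ≤
      2 * (((a : ℕ) + 1) * ((b : ℕ) + 1)) * |cfEval [a] z - cfEval [b] z'| := by
  have hpos : 0 < ((a : ℕ) + z) * ((b : ℕ) + z') :=
    mul_pos (add_pos_of_nonneg_of_pos (Nat.cast_nonneg _) hz.1)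
      (add_pos_of_nonneg_of_pos (Nat.cast_nonneg _) hz'.1)
  have hdiff : cfEval [a] z - cfEval [b] z' =
      ((b : ℕ) + z' - ((a : ℕ) + z)) / (((a : ℕ) + z) * ((b : ℕ) + z')) := by
    rw [cfEval_singleton, cfEval_singleton, div_sub_div _ _ (left_ne_zero_of_mul hpos.ne')
      (right_ne_zero_of_mul hpos.ne'), one_mul, mul_one]
  have hnum : |((a : ℕ) : ℝ) - (b : ℕ)| ≤ 2 * |(b : ℕ) + z' - ((a : ℕ) + z)| := by
    rcases lt_trichotomy (a : ℕ) b with h | h | h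
    · have : ((a : ℕ) : ℝ) + 1 ≤ (b : ℕ) := mod_cast h
      rw [abs_of_neg (by linarith), abs_of_pos (by linarith [hz.2, hz'.1])]
      linarith [hz.2, hz'.1]
    · simp [h]
    · have : ((b : ℕ) : ℝ) + 1 ≤ (a : ℕ) := mod_cast h
      rw [abs_of_pos (by linarith), abs_of_neg (by linarith [hz'.2, hz.1])]
      linarith [hz'.2, hz.1]
  rw [hdiff, abs_div, abs_of_pos hpos, mul_div_assoc', le_div_iff₀ hpos, mul_right_comm]
  have := hz.1.le
  have := hz'.1.le
  gcongr
  exacts [by linarith [hz.2], by linarith [hz'.2]]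

section DigitLevel

variable {L : ℕ} (hL : 2 ≤ L)

/-- The digit `L + ⌊L y⌋`, which for `y` in `[0, 1)` lies in `[L, 2 L)`. -/
noncomputable def scaledDigit (y : Ico (0 : ℝ) 1) : ℕ+ :=
  ⟨L + ⌊L * (y : ℝ)⌋₊, Nat.add_pos_left (two_pos.trans_le hL) _⟩

lemma coe_scaledDigit (y : Ico (0 : ℝ) 1) : (scaledDigit hL y : ℕ) = L + ⌊L * (y : ℝ)⌋₊ := rfl

lemma scaledDigit_add_one_le (y : Ico (0 : ℝ) 1) :
    ((scaledDigit hL y : ℕ) : ℝ) + 1 ≤ 2 * L := by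
  have hL0 : (0 : ℝ) < L := mod_cast two_pos.trans_le hL
  have h : ⌊L * (y : ℝ)⌋₊ < L :=
    (Nat.floor_lt (mul_nonneg hL0.le y.2.1)).2 (mul_lt_of_lt_one_right hL0 y.2.2)
  have := coe_scaledDigit hL y
  exact mod_cast (show (scaledDigit hL y : ℕ) + 1 ≤ 2 * L by omega)

/-- The coding level that reads the single digit `L + ⌊L y⌋` off `y`. -/
noncomputable def digitLevel : CodingLevel (Ico (0 : ℝ) 1) where
  word y := [scaledDigit hL y]
  shift y := ⟨Int.fract (L * (y : ℝ)), Int.fract_nonneg _, Int.fract_lt_one _⟩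
  contr _ := 1 / L
  expan _ := (2 * L) ^ 2
  word_ne_nil _ := List.cons_ne_nil _ _
  cfEval_word_le_half y z hz := by
    refine (one_div_natCast_add_mem_Ioc (scaledDigit hL y) hz.1.le).2.trans
      (one_div_le_one_div_of_le two_pos ?_)
    exact_mod_cast hL.trans (Nat.le_add_right L _)
  contr_pos _ := one_div_pos.2 (mod_cast two_pos.trans_le hL)
  expan_pos _ := by
    have : (0 : ℝ) < L := mod_cast two_pos.trans_le hL
    positivity
  dist_le_contr_mul y y' h := by
    have hL0 : (0 : ℝ) < L := mod_cast two_pos.trans_le hL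
    have hfloor : ⌊L * (y : ℝ)⌋₊ = ⌊L * (y' : ℝ)⌋₊ :=
      Nat.add_left_cancel (congrArg PNat.val (List.singleton_injective h))
    have hfloor' : (⌊L * (y : ℝ)⌋ : ℝ) = ⌊L * (y' : ℝ)⌋ := by
      rw [← natCast_floor_eq_intCast_floor (mul_nonneg hL0.le y.2.1),
        ← natCast_floor_eq_intCast_floor (mul_nonneg hL0.le y'.2.1), hfloor]
    have hfract : Int.fract (L * (y : ℝ)) - Int.fract (L * (y' : ℝ)) = L * (y - y') := by
      rw [Int.fract, Int.fract, hfloor']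
      ring
    change |(y : ℝ) - y'| ≤ 1 / L * |Int.fract (L * (y : ℝ)) - Int.fract (L * (y' : ℝ))|
    rw [hfract, abs_mul, abs_of_pos hL0, one_div, inv_mul_cancel_left₀ hL0.ne']
  abs_sub_le_expan_mul y z hz z' hz' := by
    refine (abs_sub_le_mul_abs_cfEval_singleton_sub (scaledDigit hL y) hz hz').trans ?_
    gcongr
    exact scaledDigit_add_one_le hL y

lemma dist_le_mul_abs_cfEval_scaledDigit_sub {y y' : Ico (0 : ℝ) 1}
    (hne : scaledDigit hL y ≠ scaledDigit hL y') {z z' : ℝ}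
    (hz : z ∈ Ioc (0 : ℝ) (1 / 2)) (hz' : z' ∈ Ioc (0 : ℝ) (1 / 2)) :
    dist y y' ≤ 16 * L * |cfEval [scaledDigit hL y] z - cfEval [scaledDigit hL y'] z'| := by
  have hL0 : (0 : ℝ) < L := mod_cast two_pos.trans_le hL
  set a := scaledDigit hL y
  set b := scaledDigit hL y'
  set V := |cfEval [a] z - cfEval [b] z'|
  have hfloor (x : Ico (0 : ℝ) 1) : ((scaledDigit hL x : ℕ) : ℝ) ≤ L + L * x ∧
      L + L * (x : ℝ) < (scaledDigit hL x : ℕ) + 1 := by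
    have hle := Nat.floor_le (mul_nonneg hL0.le x.2.1)
    have hlt := Nat.lt_floor_add_one (L * (x : ℝ))
    rw [coe_scaledDigit, Nat.cast_add]
    exact ⟨by linarith, by linarith⟩
  have hgap : 1 ≤ |((a : ℕ) : ℝ) - (b : ℕ)| := by
    have : (1 : ℤ) ≤ |((a : ℕ) : ℤ) - (b : ℕ)| :=
      Int.one_le_abs (sub_ne_zero.2 (mod_cast PNat.coe_injective.ne hne))
    exact_mod_cast this
  refine le_of_mul_le_mul_left ?_ hL0
  calc L * dist y y' = |L * (y : ℝ) - L * y'| := by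
        rw [← mul_sub, abs_mul, abs_of_pos hL0]; rfl
    _ ≤ |((a : ℕ) : ℝ) - (b : ℕ)| + 1 := by
        have := hfloor y
        have := hfloor y'
        have := le_abs_self (((a : ℕ) : ℝ) - (b : ℕ))
        have := neg_abs_le (((a : ℕ) : ℝ) - (b : ℕ))
        exact abs_le.2 ⟨by linarith, by linarith⟩
    _ ≤ 2 * |((a : ℕ) : ℝ) - (b : ℕ)| := by linarith
    _ ≤ 2 * (2 * (((a : ℕ) + 1) * ((b : ℕ) + 1)) * V) := by
        gcongr; exact abs_natCast_sub_le_mul_abs_cfEval_singleton_sub hz hz'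
    _ ≤ 2 * (2 * (2 * L * (2 * L)) * V) := by
        gcongr
        exacts [scaledDigit_add_one_le hL y, scaledDigit_add_one_le hL y']
    _ = L * (16 * L * V) := by ring

lemma mul_dist_le_rpow_of_scaledDigit_ne {s R M : ℝ} (hs : 0 < s) (hs1 : s ≤ 1) (hR : 0 ≤ R)
    (hM : R * (L : ℝ) ^ s ≤ M) {y y' : Ico (0 : ℝ) 1} (hne : scaledDigit hL y ≠ scaledDigit hL y')
    {z z' : ℝ} (hz : z ∈ Ioc (0 : ℝ) (1 / 2)) (hz' : z' ∈ Ioc (0 : ℝ) (1 / 2)) :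
    R * dist y y' ≤
      16 * M * |cfEval [scaledDigit hL y] z - cfEval [scaledDigit hL y'] z'| ^ s := by
  set V := |cfEval [scaledDigit hL y] z - cfEval [scaledDigit hL y'] z'|
  have hV : 0 ≤ V := abs_nonneg _
  have hdist : dist y y' ≤ 1 :=
    Real.dist_le_of_mem_Icc_01 (Ico_subset_Icc_self y.2) (Ico_subset_Icc_self y'.2)
  calc R * dist y y' ≤ R * dist y y' ^ s := by
        gcongr; exact Real.self_le_rpow_of_le_one dist_nonneg hdist hs1
    _ ≤ R * (16 * L * V) ^ s := by
        gcongr; exact dist_le_mul_abs_cfEval_scaledDigit_sub hL hne hz hz'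
    _ = 16 ^ s * (R * (L : ℝ) ^ s) * V ^ s := by
        rw [Real.mul_rpow (by positivity) hV, Real.mul_rpow (by norm_num) (Nat.cast_nonneg _)]
        ring
    _ ≤ 16 * M * V ^ s := by
        gcongr; exact Real.rpow_le_self_of_one_le (by norm_num) hs1

end DigitLevel

/-- A coding level of `[0, 1)` whose words have a common length, whose inverse branches satisfy
`contr * expan ^ s ≤ ratio`, and whose distinct words have values separated by `gap`. -/
structure UniformLevel (s : ℝ) extends CodingLevel (Ico (0 : ℝ) 1) where
  length : ℕ
  ratio : ℝ
  gap : ℝ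
  length_word : ∀ y, (word y).length = length
  contr_le_ratio : ∀ y, contr y ≤ ratio
  contr_mul_expan_rpow_le : ∀ y, contr y * expan y ^ s ≤ ratio
  gap_pos : 0 < gap
  gap_le : ∀ y y', word y ≠ word y' → ∀ z ∈ Ioo (0 : ℝ) 1, ∀ z' ∈ Ioo (0 : ℝ) 1,
    gap ≤ |cfEval (word y) z - cfEval (word y') z'|

lemma exists_uniformLevel_of_one_le_sum {n : ℕ} {A : Finset (Fin n → ℕ+)} {ρ s : ℝ} (hρ : 0 < ρ)
    (hs : 0 ≤ s) (hA : 1 ≤ ∑ w ∈ A, ρ * (18 * wordDenom w) ^ (-(2 * s))) :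
    ∃ ℓ : UniformLevel s, ℓ.length = n + 2 ∧ ℓ.ratio = ρ := by
  have hQ (w : Fin n → ℕ+) : 0 < 18 * wordDenom w := mul_pos (by norm_num) (wordDenom_pos w)
  have hweight (w : Fin n → ℕ+) : 0 < ρ * (18 * wordDenom w) ^ (-(2 * s)) :=
    mul_pos hρ (Real.rpow_pos_of_pos (hQ w) _)
  obtain ⟨D, G, hD, hG⟩ := exists_unitInterval_coding (fun w _ => hweight w) hA
  obtain ⟨c, hc, hsep⟩ := exists_pos_le_abs_cfEval_blockWord_sub A
  refine ⟨{
    word y := blockWord (D y)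
    shift := G
    contr y := ρ * (18 * wordDenom (D y)) ^ (-(2 * s))
    expan y := (18 * wordDenom (D y)) ^ 2
    word_ne_nil y := by rw [← List.length_pos_iff, length_blockWord]; exact Nat.succ_pos _
    cfEval_word_le_half y _ := cfEval_blockWord_le_half (D y)
    contr_pos y := hweight (D y)
    expan_pos y := pow_pos (hQ (D y)) 2
    dist_le_contr_mul y y' h := (hG y y' (blockWord_injective h)).le
    abs_sub_le_expan_mul y _ hz _ hz' := abs_sub_le_mul_abs_cfEval_blockWord_sub (D y) hz hz'
    length := n + 2
    ratio := ρ
    gap := c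
    length_word y := length_blockWord (D y)
    contr_le_ratio y := mul_le_of_le_one_right hρ.le <| Real.rpow_le_one_of_one_le_of_nonpos
      (by linarith [one_le_wordDenom (D y)]) (by linarith)
    contr_mul_expan_rpow_le y := by
      rw [← Real.rpow_natCast _ 2, ← Real.rpow_mul (hQ _).le, mul_assoc, ← Real.rpow_add (hQ _),
        Nat.cast_ofNat, neg_add_cancel, Real.rpow_zero, mul_one]
    gap_pos := hc
    gap_le y y' hne := hsep _ (hD y) _ (hD y') (ne_of_apply_ne blockWord hne) }, rfl, rfl⟩

theorem exists_uniformLevel {B F s : ℝ} (hB : 0 < B) (hs : 0 ≤ s) (h : ¬NonposPressure B F s) :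
    ∃ ℓ : UniformLevel s, ℓ.ratio * B ^ (F * ℓ.length) < 1 := by
  obtain ⟨n, A, ρ, hρ, hρB, hA⟩ := exists_block_alphabet hB h
  obtain ⟨ℓ, hlength, hratio⟩ := exists_uniformLevel_of_one_le_sum hρ hs hA
  exact ⟨ℓ, by rwa [hlength, hratio]⟩

/-! ### The schedule of runs -/

lemma one_div_mul_sq_rpow_le {X L s : ℝ} (hX : 0 < X) (hXL : X ≤ L) (hLX : L ≤ 3 * X)
    (hs : s ≤ 1) : 1 / L * ((2 * L) ^ 2) ^ s ≤ 12 * X ^ (2 * s - 1) := by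
  have hL : 0 < L := hX.trans_le hXL
  have hsplit : 1 / L * ((2 * L) ^ 2) ^ s = 4 ^ s * L ^ (2 * s - 1) := by
    rw [mul_pow, Real.mul_rpow (by positivity) (by positivity), ← Real.rpow_natCast L 2,
      ← Real.rpow_mul hL.le, Real.rpow_sub hL, Real.rpow_one]
    norm_num
    ring
  have hpow : L ^ (2 * s - 1) ≤ 3 * X ^ (2 * s - 1) := by
    rcases le_total 0 (2 * s - 1) with h | h
    · calc L ^ (2 * s - 1) ≤ (3 * X) ^ (2 * s - 1) := Real.rpow_le_rpow hL.le hLX h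
        _ = 3 ^ (2 * s - 1) * X ^ (2 * s - 1) := Real.mul_rpow (by norm_num) hX.le
        _ ≤ 3 * X ^ (2 * s - 1) := by
          gcongr; exact Real.rpow_le_self_of_one_le (by norm_num) (by linarith)
    · calc L ^ (2 * s - 1) ≤ X ^ (2 * s - 1) := Real.rpow_le_rpow_of_nonpos hX hXL h
        _ ≤ 3 * X ^ (2 * s - 1) := le_mul_of_one_le_left (by positivity) (by norm_num)
  calc 1 / L * ((2 * L) ^ 2) ^ s = 4 ^ s * L ^ (2 * s - 1) := hsplit
    _ ≤ 4 * (3 * X ^ (2 * s - 1)) := by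
      gcongr; exact Real.rpow_le_self_of_one_le (by norm_num) hs
    _ = 12 * X ^ (2 * s - 1) := by ring

/-- The data of the construction of a large subset of `largeProductSet m B`: blocks of `block` are
concatenated and, infinitely often, interrupted by a run of `m` digits whose product is large. -/
structure RunScheme (m : ℕ) (B F s : ℝ) where
  block : UniformLevel s
  one_le_base : 1 ≤ B
  s_pos : 0 < s
  s_le_one : s ≤ 1
  F_nonneg : 0 ≤ F
  digitExponent_eq_one : digitExponent s F m = 1
  block_ratio_mul_lt_one : block.ratio * B ^ (F * block.length) < 1

/-- The state of the construction after some levels: `ratio` is the product of their ratios,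
`length` the number of digits written, and `start` the index of the first digit of the last run.
While a run is being written, `step < m` of its digits are there already; otherwise `step = m`. -/
structure RunState where
  ratio : ℝ
  length : ℕ
  start : ℕ
  step : ℕ

namespace RunState

/-- The lower bound imposed on the next digit of a run. For a run starting at the index `o`, these
bounds multiply to `B ^ o`, since `digitExponent s F m = 1`. -/
noncomputable def digitSize (B F s : ℝ) (S : RunState) : ℝ :=
  B ^ ((S.start : ℝ) * (digitExponent s F (S.step + 1) - digitExponent s F S.step))

/-- The number of values allowed for the next digit of a run, and the smallest of these values. -/
noncomputable def alphabetSize (B F s : ℝ) (S : RunState) : ℕ :=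
  ⌊S.digitSize B F s⌋₊ + 2

/-- The quantity that has to be at most `1` for a new run to start. -/
noncomputable def potential (B F : ℝ) (S : RunState) : ℝ :=
  S.ratio * B ^ (F * (S.length + 1 : ℕ))

lemma digitSize_le_alphabetSize (B F s : ℝ) (S : RunState) :
    S.digitSize B F s ≤ S.alphabetSize B F s := by
  have := Nat.lt_floor_add_one (S.digitSize B F s)
  rw [alphabetSize]
  push_cast
  linarith

lemma two_le_alphabetSize (B F s : ℝ) (S : RunState) : 2 ≤ S.alphabetSize B F s :=
  Nat.le_add_left 2 _

end RunState

namespace RunScheme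

variable {m : ℕ} {B F s : ℝ} (P : RunScheme m B F s) {S : RunState}

include P in
lemma base_pos : 0 < B := one_pos.trans_le P.one_le_base

lemma ratio_pos : 0 < P.block.ratio :=
  have y : Ico (0 : ℝ) 1 := ⟨0, le_rfl, one_pos⟩
  (P.block.contr_pos y).trans_le (P.block.contr_le_ratio y)

lemma ratio_lt_one : P.block.ratio < 1 :=
  (le_mul_of_one_le_right P.ratio_pos.le (Real.one_le_rpow P.one_le_base
    (mul_nonneg P.F_nonneg (Nat.cast_nonneg _)))).trans_lt P.block_ratio_mul_lt_one

lemma block_length_pos : 0 < P.block.length := by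
  have y : Ico (0 : ℝ) 1 := ⟨0, le_rfl, one_pos⟩
  rw [← P.block.length_word y]
  exact List.length_pos_iff.2 (P.block.word_ne_nil y)

include P in
lemma one_le_digitSize (S : RunState) : 1 ≤ S.digitSize B F s :=
  Real.one_le_rpow P.one_le_base (mul_nonneg (Nat.cast_nonneg _)
    (sub_nonneg.2 (digitExponent_monotone P.s_pos P.s_le_one P.F_nonneg (Nat.le_succ S.step))))

include P in
lemma alphabetSize_le (S : RunState) :
    (S.alphabetSize B F s : ℝ) ≤ 3 * S.digitSize B F s := by
  have hX := P.one_le_digitSize S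
  have := Nat.floor_le (zero_le_one.trans hX)
  rw [RunState.alphabetSize]
  push_cast
  linarith

/-- The level used in the state `S`: one digit of a run, or a block. -/
noncomputable def level (S : RunState) : CodingLevel (Ico (0 : ℝ) 1) :=
  if S.step < m then digitLevel (S.two_le_alphabetSize B F s) else P.block.toCodingLevel

/-- The number of digits written by `P.level S`. -/
noncomputable def levelLength (S : RunState) : ℕ :=
  if S.step < m then 1 else P.block.length

/-- The ratio of `P.level S`, a bound for its `contr * expan ^ s`. -/
noncomputable def levelRatio (S : RunState) : ℝ :=
  if S.step < m then 1 / S.alphabetSize B F s * ((2 * S.alphabetSize B F s) ^ 2) ^ s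
  else P.block.ratio

/-- A new run starts after the block written in the state `S`. -/
def StartsRun (S : RunState) : Prop :=
  m ≤ S.step ∧
    S.ratio * P.levelRatio S * B ^ (F * (S.length + P.levelLength S + 1 : ℕ)) ≤ 1

open Classical in
/-- The state after the level used in the state `S`. -/
noncomputable def next (S : RunState) : RunState where
  ratio := S.ratio * P.levelRatio S
  length := S.length + P.levelLength S
  start := if P.StartsRun S then S.length + P.levelLength S + 1 else S.start
  step := if P.StartsRun S then 0 else min (S.step + 1) m

/-- The state after `t` levels. -/
noncomputable def state : ℕ → RunState
  | 0 => ⟨1, 0, 0, m⟩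
  | t + 1 => P.next (state t)

lemma levelRatio_pos (S : RunState) : 0 < P.levelRatio S := by
  have : (0 : ℝ) < S.alphabetSize B F s := mod_cast two_pos.trans_le (S.two_le_alphabetSize B F s)
  rw [levelRatio]
  split_ifs
  · positivity
  · exact P.ratio_pos

lemma levelLength_pos (S : RunState) : 0 < P.levelLength S := by
  rw [levelLength]
  split_ifs
  exacts [one_pos, P.block_length_pos]

lemma levelRatio_le_of_step_lt (h : S.step < m) :
    P.levelRatio S ≤ 12 * S.digitSize B F s ^ (2 * s - 1) := by
  rw [levelRatio, if_pos h]
  exact one_div_mul_sq_rpow_le (one_pos.trans_le (P.one_le_digitSize S))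
    (S.digitSize_le_alphabetSize B F s) (P.alphabetSize_le S) P.s_le_one

lemma next_start_of_step_lt (h : S.step < m) : (P.next S).start = S.start :=
  if_neg fun hS => h.not_ge hS.1

lemma next_step_of_step_lt (h : S.step < m) : (P.next S).step = S.step + 1 :=
  (if_neg fun hS => h.not_ge hS.1).trans (min_eq_left h)

lemma next_length_of_step_lt (h : S.step < m) : (P.next S).length = S.length + 1 :=
  congrArg (S.length + ·) (if_pos h)

/-- The invariant of the construction. When a run starts at the index `o`, the ratio is at most
`B ^ (-F * o)`, and the last bound accounts for the ratios of the digits of the run. -/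
structure IsAdmissible (m : ℕ) (B F s : ℝ) (S : RunState) : Prop where
  step_le : S.step ≤ m
  ratio_pos : 0 < S.ratio
  ratio_le : S.ratio ≤ 12 ^ m
  length_add_one : S.step < m → S.length + 1 = S.start + S.step
  ratio_le_of_step_lt : S.step < m →
    S.ratio ≤ 12 ^ S.step * B ^ ((S.start : ℝ) * ((2 * s - 1) * digitExponent s F S.step - F))

lemma isAdmissible_next_of_step_lt (hS : IsAdmissible m B F s S) (h : S.step < m) :
    IsAdmissible m B F s (P.next S) := by
  have hB := P.base_pos
  have hstep := P.next_step_of_step_lt h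
  have hstart := P.next_start_of_step_lt h
  have hbound : (P.next S).ratio ≤ 12 ^ (S.step + 1) *
      B ^ ((S.start : ℝ) * ((2 * s - 1) * digitExponent s F (S.step + 1) - F)) := by
    calc S.ratio * P.levelRatio S
        ≤ 12 ^ S.step * B ^ ((S.start : ℝ) * ((2 * s - 1) * digitExponent s F S.step - F)) *
            (12 * S.digitSize B F s ^ (2 * s - 1)) :=
          mul_le_mul (hS.ratio_le_of_step_lt h) (P.levelRatio_le_of_step_lt h)
            (P.levelRatio_pos S).le (by positivity)
      _ = 12 ^ (S.step + 1) *
            (B ^ ((S.start : ℝ) * ((2 * s - 1) * digitExponent s F S.step - F)) *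
              S.digitSize B F s ^ (2 * s - 1)) := by ring
      _ = _ := by
          rw [RunState.digitSize, ← Real.rpow_mul hB.le, ← Real.rpow_add hB]
          ring_nf
  have hle_one :
      B ^ ((S.start : ℝ) * ((2 * s - 1) * digitExponent s F (S.step + 1) - F)) ≤ 1 :=
    Real.rpow_le_one_of_one_le_of_nonpos P.one_le_base <|
      mul_nonpos_of_nonneg_of_nonpos (Nat.cast_nonneg _) <| sub_nonpos.2 <|
        two_mul_sub_one_mul_digitExponent_le P.s_pos P.s_le_one P.F_nonneg _
  refine ⟨hstep.trans_le h, mul_pos hS.ratio_pos (P.levelRatio_pos S), hbound.trans ?_,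
    fun _ => ?_, fun _ => by rwa [hstep, hstart]⟩
  · calc _ ≤ (12 : ℝ) ^ (S.step + 1) := mul_le_of_le_one_right (by positivity) hle_one
      _ ≤ 12 ^ m := pow_le_pow_right₀ (by norm_num) h
  · rw [hstep, hstart, P.next_length_of_step_lt h, hS.length_add_one h, add_assoc]

lemma isAdmissible_next_of_le_step (hS : IsAdmissible m B F s S) (h : m ≤ S.step) :
    IsAdmissible m B F s (P.next S) := by
  have hpos : 0 < (P.next S).ratio := mul_pos hS.ratio_pos (P.levelRatio_pos S)
  have hle : (P.next S).ratio ≤ 12 ^ m := by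
    change S.ratio * P.levelRatio S ≤ _
    rw [levelRatio, if_neg h.not_gt]
    exact (mul_le_of_le_one_right hS.ratio_pos.le P.ratio_lt_one.le).trans hS.ratio_le
  by_cases hrun : P.StartsRun S
  · have hstep : (P.next S).step = 0 := if_pos hrun
    have hstart : (P.next S).start = (P.next S).length + 1 := if_pos hrun
    refine ⟨hstep.trans_le (Nat.zero_le _), hpos, hle, fun _ => by rw [hstep, hstart, add_zero],
      fun _ => ?_⟩
    rw [hstep, hstart, pow_zero, one_mul, digitExponent, mul_zero, zero_sub, mul_neg, mul_comm,
      Real.rpow_neg P.base_pos.le, ← one_div, le_div_iff₀ (Real.rpow_pos_of_pos P.base_pos _)]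
    exact hrun.2
  · have hstep : (P.next S).step = m := (if_neg hrun).trans (min_eq_right (Nat.le_succ_of_le h))
    exact ⟨hstep.le, hpos, hle, fun hlt => absurd hstep hlt.ne, fun hlt => absurd hstep hlt.ne⟩

lemma isAdmissible_state (t : ℕ) : IsAdmissible m B F s (P.state t) := by
  induction t with
  | zero =>
    exact ⟨le_rfl, one_pos, one_le_pow₀ (by norm_num), fun h => absurd h (lt_irrefl m),
      fun h => absurd h (lt_irrefl m)⟩
  | succ t ih =>
    rcases lt_or_ge (P.state t).step m with h | h
    exacts [P.isAdmissible_next_of_step_lt ih h, P.isAdmissible_next_of_le_step ih h]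

include P in
lemma ratio_mul_alphabetSize_rpow_le (hS : IsAdmissible m B F s S) (h : S.step < m) :
    S.ratio * (S.alphabetSize B F s : ℝ) ^ s ≤ 3 * 12 ^ m := by
  have hB := P.base_pos
  have hX : 0 < S.digitSize B F s := one_pos.trans_le (P.one_le_digitSize S)
  have hL : (S.alphabetSize B F s : ℝ) ^ s ≤ 3 * S.digitSize B F s ^ s := by
    calc (S.alphabetSize B F s : ℝ) ^ s ≤ (3 * S.digitSize B F s) ^ s :=
          Real.rpow_le_rpow (Nat.cast_nonneg _) (P.alphabetSize_le S) P.s_pos.le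
      _ = 3 ^ s * S.digitSize B F s ^ s := Real.mul_rpow (by norm_num) hX.le
      _ ≤ 3 * S.digitSize B F s ^ s := by
          gcongr; exact Real.rpow_le_self_of_one_le (by norm_num) P.s_le_one
  -- the recursion for `digitExponent` makes the powers of `B` cancel
  have hcancel : B ^ ((S.start : ℝ) * ((2 * s - 1) * digitExponent s F S.step - F)) *
      S.digitSize B F s ^ s = 1 := by
    rw [RunState.digitSize, ← Real.rpow_mul hB.le, ← Real.rpow_add hB]
    refine (congrArg (B ^ ·) ?_).trans (Real.rpow_zero B)
    linear_combination (S.start : ℝ) * mul_digitExponent_succ P.s_pos.ne' F S.step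
  calc S.ratio * (S.alphabetSize B F s : ℝ) ^ s
      ≤ 12 ^ S.step * B ^ ((S.start : ℝ) * ((2 * s - 1) * digitExponent s F S.step - F)) *
          (3 * S.digitSize B F s ^ s) :=
        mul_le_mul (hS.ratio_le_of_step_lt h) hL (by positivity) (by positivity)
    _ = 3 * 12 ^ S.step * (B ^ ((S.start : ℝ) * ((2 * s - 1) * digitExponent s F S.step - F)) *
          S.digitSize B F s ^ s) := by ring
    _ = 3 * 12 ^ S.step := by rw [hcancel, mul_one]
    _ ≤ 3 * 12 ^ m := by gcongr; norm_num

lemma state_ratio (t : ℕ) :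
    (P.state t).ratio = ∏ i ∈ Finset.range t, P.levelRatio (P.state i) := by
  induction t with
  | zero => rfl
  | succ t ih => rw [Finset.prod_range_succ, ← ih]; rfl

lemma le_state_length (t : ℕ) : t ≤ (P.state t).length := by
  induction t with
  | zero => exact Nat.zero_le _
  | succ t ih => exact Nat.add_le_add ih (P.levelLength_pos _)

lemma state_add_of_step_add_le {t k : ℕ} (h : (P.state t).step + k ≤ m) :
    (P.state (t + k)).step = (P.state t).step + k ∧
      (P.state (t + k)).start = (P.state t).start := by
  induction k with
  | zero => exact ⟨rfl, rfl⟩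
  | succ k ih =>
    obtain ⟨hstep, hstart⟩ := ih (by omega)
    have hlt : (P.state (t + k)).step < m := by omega
    exact ⟨(P.next_step_of_step_lt hlt).trans (congrArg (· + 1) hstep),
      (P.next_start_of_step_lt hlt).trans hstart⟩

lemma state_step_eq_of_forall_not_startsRun {t k : ℕ} (h : ∀ i ≥ t, ¬P.StartsRun (P.state i))
    (hk : m ≤ k) : (P.state (t + k)).step = m := by
  have hmin : (P.state (t + k)).step = min ((P.state t).step + k) m := by
    clear hk
    induction k with
    | zero => exact (min_eq_left (P.isAdmissible_state t).step_le).symm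
    | succ k ih =>
      have hnext : (P.state (t + k + 1)).step = min ((P.state (t + k)).step + 1) m :=
        if_neg (h _ (Nat.le_add_right _ _))
      rw [← add_assoc, hnext, ih]
      omega
  rw [hmin, min_eq_right (hk.trans (Nat.le_add_left _ _))]

lemma potential_next_of_le_step (h : m ≤ S.step) :
    (P.next S).potential B F =
      S.potential B F * (P.block.ratio * B ^ (F * P.block.length)) := by
  have hratio : (P.next S).ratio = S.ratio * P.block.ratio := congrArg _ (if_neg h.not_gt)
  have hlength : (P.next S).length = S.length + P.block.length := congrArg _ (if_neg h.not_gt)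
  rw [RunState.potential, RunState.potential, hratio, hlength, add_right_comm, Nat.cast_add,
    mul_add, Real.rpow_add P.base_pos]
  ring

-- Each block multiplies the potential by a constant smaller than `1`, so a new run must start.
lemma exists_ge_startsRun (t : ℕ) : ∃ i ≥ t, P.StartsRun (P.state i) := by
  by_contra! h
  have hstep (k : ℕ) : (P.state (t + m + k)).step = m := by
    rw [add_assoc]
    exact P.state_step_eq_of_forall_not_startsRun h (Nat.le_add_right _ _)
  have hpow (k : ℕ) : (P.state (t + m + k)).potential B F =
      (P.state (t + m)).potential B F * (P.block.ratio * B ^ (F * P.block.length)) ^ k := by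
    induction k with
    | zero => rw [pow_zero, mul_one, add_zero]
    | succ k ih =>
      rw [pow_succ, ← mul_assoc, ← ih]
      exact P.potential_next_of_le_step (hstep k).ge
  have hlim : Tendsto (fun k => (P.state (t + m + k)).potential B F) atTop (nhds 0) := by
    simp_rw [hpow]
    simpa using (tendsto_pow_atTop_nhds_zero_of_lt_one
      (mul_nonneg P.ratio_pos.le (Real.rpow_pos_of_pos P.base_pos _).le)
      P.block_ratio_mul_lt_one).const_mul _
  obtain ⟨k, hk⟩ := ((tendsto_add_atTop_iff_nat 1).2 hlim |>.eventually_lt_const one_pos).exists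
  exact h (t + m + k) (by omega) ⟨(hstep k).ge, hk.le⟩

lemma exists_ge_state_step_eq_zero (t : ℕ) : ∃ i ≥ t, (P.state i).step = 0 := by
  obtain ⟨i, hi, hrun⟩ := P.exists_ge_startsRun t
  exact ⟨i + 1, hi.trans i.le_succ, if_pos hrun⟩

end RunScheme

/-! ### The lower bound -/

namespace RunScheme

variable {m : ℕ} {B F s : ℝ} (P : RunScheme m B F s)

lemma length_word_level (S : RunState) (y : Ico (0 : ℝ) 1) :
    ((P.level S).word y).length = P.levelLength S := by
  rw [level, levelLength]
  split_ifs
  exacts [rfl, P.block.length_word y]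

lemma contr_level_le (S : RunState) (y : Ico (0 : ℝ) 1) :
    (P.level S).contr y ≤ max P.block.ratio (1 / 2) := by
  rw [level]
  split_ifs
  · exact le_max_of_le_right
      (one_div_le_one_div_of_le two_pos (mod_cast S.two_le_alphabetSize B F s))
  · exact le_max_of_le_left (P.block.contr_le_ratio y)

lemma contr_level_mul_expan_rpow_le (S : RunState) (y : Ico (0 : ℝ) 1) :
    (P.level S).contr y * (P.level S).expan y ^ s ≤ P.levelRatio S := by
  rw [level, levelRatio]
  split_ifs
  exacts [le_rfl, P.block.contr_mul_expan_rpow_le y]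

lemma mul_dist_le_of_block_word_ne {R : ℝ} (hR : 0 ≤ R) {y y' : Ico (0 : ℝ) 1}
    (hne : P.block.word y ≠ P.block.word y') {z z' : ℝ} (hz : z ∈ Ioo (0 : ℝ) 1)
    (hz' : z' ∈ Ioo (0 : ℝ) 1) :
    R * dist y y' ≤ R * P.block.gap ^ (-s) *
      |cfEval (P.block.word y) z - cfEval (P.block.word y') z'| ^ s := by
  have hgap := P.block.gap_pos
  have hs := P.s_pos.le
  have hdist : dist y y' ≤ 1 :=
    Real.dist_le_of_mem_Icc_01 (Ico_subset_Icc_self y.2) (Ico_subset_Icc_self y'.2)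
  calc R * dist y y' ≤ R * 1 := by gcongr
    _ = R * P.block.gap ^ (-s) * P.block.gap ^ s := by
      rw [mul_assoc, ← Real.rpow_add hgap, neg_add_cancel, Real.rpow_zero]
    _ ≤ _ := by gcongr; exact P.block.gap_le y y' hne z hz z' hz'

lemma isSeparated_level :
    CodingLevel.IsSeparated (fun t => P.level (P.state t)) s
      (max (12 ^ m * P.block.gap ^ (-s)) (16 * (3 * 12 ^ m)))
      fun t => P.levelRatio (P.state t) := by
  intro t y y' hne z hz z' hz'
  have hS := P.isAdmissible_state t
  rw [← P.state_ratio]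
  have hgap := P.block.gap_pos
  by_cases h : (P.state t).step < m
  · simp only [level, h, if_true] at hne ⊢
    refine (mul_dist_le_rpow_of_scaledDigit_ne _ P.s_pos P.s_le_one hS.ratio_pos.le
      (P.ratio_mul_alphabetSize_rpow_le hS h) (fun heq => hne (congrArg (fun a => [a]) heq))
      hz hz').trans (mul_le_mul_of_nonneg_right (le_max_right _ _) (by positivity))
  · simp only [level, h, if_false] at hne ⊢
    have hIoo : Ioc (0 : ℝ) (1 / 2) ⊆ Ioo 0 1 := Ioc_subset_Ioo_right one_half_lt_one
    refine (P.mul_dist_le_of_block_word_ne hS.ratio_pos.le hne (hIoo hz) (hIoo hz')).trans ?_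
    gcongr
    exact le_max_of_le_left (by gcongr; exact hS.ratio_le)

/-- The numbers whose continued fraction expansion follows the construction. -/
def runSet : Set ℝ :=
  CodingLevel.codedSet fun t => P.level (P.state t)

lemma ofReal_le_dimH_runSet : ENNReal.ofReal s ≤ dimH P.runSet := by
  have hgap := P.block.gap_pos
  have hdim : dimH (univ : Set (Ico (0 : ℝ) 1)) = 1 := by
    rw [← isometry_subtype_coe.dimH_image, image_univ, Subtype.range_coe]
    refine (Real.dimH_of_nonempty_interior ?_).trans (by simp)
    rw [interior_Ico]
    exact nonempty_Ioo.2 one_pos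
  have hbdd : BoundedSpace (Ico (0 : ℝ) 1) :=
    Metric.isBounded_Ico 0 1 |>.boundedSpace_subtype
  have h := CodingLevel.ofReal_mul_dimH_univ_le_dimH_codedSet P.s_pos
    (max_lt P.ratio_lt_one one_half_lt_one) (by positivity) (fun _ => P.levelRatio_pos _)
    (fun _ => P.contr_level_le _) (fun _ => P.contr_level_mul_expan_rpow_le _) P.isSeparated_level
  rwa [hdim, mul_one] at h

/-- `z t` is the tail of an element of `P.runSet` that remains after `t` levels. -/
def IsRunTail (z : ℕ → ℝ) : Prop :=
  CodingLevel.IsCodedSeq (fun t => P.level (P.state t)) z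

variable {P} {z : ℕ → ℝ}

lemma IsRunTail.iterate_gaussMap (hz : P.IsRunTail z) (t : ℕ) :
    gaussMap^[(P.state t).length] (z 0) = z t := by
  induction t with
  | zero => rfl
  | succ t ih =>
    obtain ⟨y, hy⟩ := (hz t).2
    have hlength : (P.state (t + 1)).length =
        ((P.level (P.state t)).word y).length + (P.state t).length := by
      rw [length_word_level]
      exact add_comm _ _
    rw [hlength, Function.iterate_add_apply, ih, hy, iterate_gaussMap_cfEval (hz (t + 1)).1 le_rfl,
      List.drop_length]
    rfl

lemma IsRunTail.digitSize_le_pq (hz : P.IsRunTail z) {t : ℕ} (h : (P.state t).step < m) :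
    (P.state t).digitSize B F s ≤ pq (z 0) ((P.state t).length + 1) := by
  obtain ⟨y, hy⟩ := (hz t).2
  simp only [level, h, if_true] at hy
  have hpq : pq (z 0) ((P.state t).length + 1) =
      scaledDigit ((P.state t).two_le_alphabetSize B F s) y := by
    rw [pq_succ, hz.iterate_gaussMap, hy]
    exact floor_one_div_cfEval_cons _ [] (hz (t + 1)).1
  rw [hpq, coe_scaledDigit, Nat.cast_add]
  exact ((P.state t).digitSize_le_alphabetSize B F s).trans
    (le_add_of_nonneg_right (Nat.cast_nonneg _))

lemma IsRunTail.pow_start_le_prod_pq (hz : P.IsRunTail z) {t : ℕ} (h : (P.state t).step = 0) :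
    B ^ (P.state t).start ≤ ∏ i ∈ Finset.range m, (pq (z 0) ((P.state t).start + i) : ℝ) := by
  have hB := P.base_pos
  have hdigit : ∀ i ∈ Finset.range m,
      B ^ (((P.state t).start : ℝ) * (digitExponent s F (i + 1) - digitExponent s F i)) ≤
        (pq (z 0) ((P.state t).start + i) : ℝ) := by
    intro i hi
    have hi' := Finset.mem_range.1 hi
    obtain ⟨hstep, hstart⟩ := P.state_add_of_step_add_le (t := t) (k := i) (by omega)
    rw [h, zero_add] at hstep
    have hlt : (P.state (t + i)).step < m := hstep.trans_lt hi'
    have hindex := (P.isAdmissible_state (t + i)).length_add_one hlt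
    have hle := hz.digitSize_le_pq hlt
    rwa [hindex, RunState.digitSize, hstart, hstep] at hle
  calc B ^ (P.state t).start
      = ∏ i ∈ Finset.range m,
          B ^ (((P.state t).start : ℝ) * (digitExponent s F (i + 1) - digitExponent s F i)) := by
        rw [← Real.rpow_sum_of_pos hB, ← Finset.mul_sum, Finset.sum_range_sub,
          P.digitExponent_eq_one, digitExponent, sub_zero, mul_one, Real.rpow_natCast]
    _ ≤ _ := Finset.prod_le_prod (fun i _ => (Real.rpow_pos_of_pos hB _).le) hdigit

lemma IsRunTail.infinite_setOf_pow_le_prod_pq (hz : P.IsRunTail z) :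
    {n : ℕ | B ^ n ≤ ∏ i ∈ Finset.range m, (pq (z 0) (n + i) : ℝ)}.Infinite := by
  have hm : m ≠ 0 := by
    rintro rfl
    exact zero_ne_one P.digitExponent_eq_one
  refine infinite_of_forall_exists_gt fun k => ?_
  obtain ⟨t, ht, hstep⟩ := P.exists_ge_state_step_eq_zero k
  have := (P.isAdmissible_state t).length_add_one (by omega)
  have := P.le_state_length t
  exact ⟨(P.state t).start, hz.pow_start_le_prod_pq hstep, by omega⟩

variable (P)

lemma runSet_subset : P.runSet ⊆ largeProductSet m B ∪ range ((↑) : ℚ → ℝ) := by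
  rintro _ ⟨z, rfl, hz⟩
  rw [mem_union, or_iff_not_imp_right]
  exact fun hirr => ⟨(hz 0).1, hirr, IsRunTail.infinite_setOf_pow_le_prod_pq hz⟩

lemma dimH_runSet_le : dimH P.runSet ≤ dimH (largeProductSet m B) := by
  refine (dimH_mono P.runSet_subset).trans_eq ?_
  rw [dimH_union, (countable_range _).dimH_zero, max_eq_left zero_le]

end RunScheme

theorem ofReal_le_dimH_largeProductSet {m : ℕ} {B s : ℝ} (hm : 1 ≤ m) (hB : 1 ≤ B) (hs : 0 < s)
    (hs1 : s ≤ 1) (h : ¬NonposPressure B (fIter s (m - 1)) s) :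
    ENNReal.ofReal s ≤ dimH (largeProductSet m B) := by
  obtain ⟨ℓ, hℓ⟩ := exists_uniformLevel (one_pos.trans_le hB) hs.le h
  let P : RunScheme m B (fIter s (m - 1)) s :=
    ⟨ℓ, hB, hs, hs1, (fIter_pos hs hs1 _).le, digitExponent_fIter_pred hs hs1 hm, hℓ⟩
  exact P.ofReal_le_dimH_runSet.trans P.dimH_runSet_le

theorem ofReal_tExpM_le_dimH_largeProductSet {m : ℕ} {B : ℝ} (hm : 1 ≤ m) (hB : 1 ≤ B) :
    ENNReal.ofReal (tExpM B m) ≤ dimH (largeProductSet m B) := by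
  have hbdd : BddBelow {s : ℝ | 0 ≤ s ∧ s ≤ 1 ∧ NonposPressure B (fIter s (m - 1)) s} :=
    ⟨0, fun _ h => h.1⟩
  refine le_of_forall_lt_imp_le_of_dense fun c hc => ?_
  rcases eq_or_ne c 0 with rfl | hc0
  · exact zero_le
  have hc_top : c ≠ ⊤ := ne_top_of_lt hc
  have hpos : 0 < c.toReal := ENNReal.toReal_pos hc0 hc_top
  have hlt : c.toReal < tExpM B m := (ENNReal.lt_ofReal_iff_toReal_lt hc_top).1 hc
  have hle_one : c.toReal ≤ 1 :=
    hlt.le.trans (csInf_le hbdd ⟨zero_le_one, le_rfl, nonposPressure_fIter_one hB _⟩)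
  rw [← ENNReal.ofReal_toReal hc_top]
  exact ofReal_le_dimH_largeProductSet hm hB hpos hle_one fun h =>
    hlt.not_ge (csInf_le hbdd ⟨hpos.le, hle_one, h⟩)

theorem huang_wu_xu (m : ℕ) (hm : 1 ≤ m) (B : ℝ) (hB : 1 ≤ B) :
    dimH {x : ℝ | x ∈ Set.Ioo (0 : ℝ) 1 ∧ Irrational x ∧
      {n : ℕ | B ^ n ≤ ∏ i ∈ Finset.range m, (pq x (n + i) : ℝ)}.Infinite} =
    ENNReal.ofReal (tExpM B m) :=
  le_antisymm (dimH_largeProductSet_le_tExpM hm hB) (ofReal_tExpM_le_dimH_largeProductSet hm hB)
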